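/- arXiv:1208.5361 — 2 statements merged into one kernel-verified Lean document; each statement's English description precedes it below -/
import Mathlib

section
/- Let n ≥ 1 and let f : ℝⁿ → ℝ be a smooth convex function with f(0) = 0, ∇f(0) = 0, and positive definite Hessian D²f(0). Then lim_{t → 0⁺} t^{-(n+2)/2} · ∫_{{x : f(x) < t}} (t − f(x)) dx = (√2)^{n+2} · ω_n / ((n+2) · √(det D²f(0))). -/
open MeasureTheory Filter
open scoped RealInnerProductSpace Topology

/-- The Hessian matrix of `f : ℝⁿ → ℝ` at a point `x`, with entries the second
partial derivatives of `f`. -/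
noncomputable def hessianMatrix {n : ℕ} (f : EuclideanSpace ℝ (Fin n) → ℝ)
    (x : EuclideanSpace ℝ (Fin n)) : Matrix (Fin n) (Fin n) ℝ :=
  Matrix.of fun i j =>
    iteratedFDeriv ℝ 2 f x ![EuclideanSpace.single i 1, EuclideanSpace.single j 1]

section QuadraticModel

variable {E : Type*} [NormedAddCommGroup E] [InnerProductSpace ℝ E]

/-- Second-order Taylor expansion at a critical point whose second derivative is
`(x, y) ↦ ⟪T x, T y⟫`. -/
theorem isLittleO_sub_half_norm_sq {f : E → ℝ} {T : E →L[ℝ] E}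
    (hf : Differentiable ℝ f) (hf' : DifferentiableAt ℝ (fderiv ℝ f) 0)
    (hf0 : f 0 = 0) (hd : fderiv ℝ f 0 = 0)
    (hT : ∀ x y, fderiv ℝ (fderiv ℝ f) 0 x y = ⟪T x, T y⟫) :
    (fun x => f x - ‖T x‖ ^ 2 / 2) =o[𝓝 0] fun x => ‖x‖ ^ 2 := by
  have hQ : ∀ z, HasFDerivAt (fun x => f x - ‖T x‖ ^ 2 / 2)
      (fderiv ℝ f z - fderiv ℝ (fderiv ℝ f) 0 z) z := by
    intro z
    have h1 := ((T.hasFDerivAt (x := z)).norm_sq).mul_const (2⁻¹ : ℝ)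
    refine ((hf z).hasFDerivAt.sub h1).congr_fderiv ?_
    ext y
    simp [hT]
  rw [Asymptotics.isLittleO_iff]
  intro ε hε
  have h := hf'.hasFDerivAt.isLittleO
  rw [Asymptotics.isLittleO_iff] at h
  obtain ⟨δ, hδ, hb⟩ := Metric.eventually_nhds_iff.1 (h hε)
  refine Metric.eventually_nhds_iff.2 ⟨δ, hδ, fun x hx => ?_⟩
  rw [dist_zero_right] at hx
  have key := (convex_closedBall (0 : E) ‖x‖).norm_image_sub_le_of_norm_hasFDerivWithin_le
    (C := ε * ‖x‖) (x := 0) (y := x) (fun z _ => (hQ z).hasFDerivWithinAt) ?_ (by simp) (by simp)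
  · simpa [hf0, mul_assoc, sq] using key
  · intro z hz
    rw [mem_closedBall_zero_iff] at hz
    have h2 := hb (y := z) (by rw [dist_zero_right]; linarith)
    rw [hd, sub_zero, sub_zero] at h2
    exact h2.trans (by gcongr)

theorem tendsto_div_sq_of_isLittleO {f : E → ℝ} {T : E →L[ℝ] E}
    (h : (fun x => f x - ‖T x‖ ^ 2 / 2) =o[𝓝 0] fun x => ‖x‖ ^ 2) (y : E) :
    Tendsto (fun s : ℝ => f (s • y) / s ^ 2) (𝓝[>] 0) (𝓝 (‖T y‖ ^ 2 / 2)) := by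
  have hs : Tendsto (fun s : ℝ => s • y) (𝓝[>] 0) (𝓝 0) := by
    have : Continuous fun s : ℝ => s • y := by fun_prop
    simpa using (this.tendsto 0).mono_left nhdsWithin_le_nhds
  have h1 : (fun s : ℝ => f (s • y) - ‖T (s • y)‖ ^ 2 / 2) =o[𝓝[>] 0] fun s : ℝ => s ^ 2 := by
    refine (h.comp_tendsto hs).trans_isBigO ?_
    refine Asymptotics.IsBigO.of_bound (‖y‖ ^ 2) (Eventually.of_forall fun s => ?_)
    simp [norm_smul, mul_pow, mul_comm]
  have h2 := h1.tendsto_div_nhds_zero.add_const (‖T y‖ ^ 2 / 2)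
  rw [zero_add] at h2
  refine h2.congr' ?_
  filter_upwards [self_mem_nhdsWithin] with s (hs : 0 < s)
  rw [map_smul, norm_smul, mul_pow, Real.norm_eq_abs, sq_abs]
  field_simp
  ring

/-- A convex function bounded below by `c ‖x‖ ^ 2` near the origin grows at least linearly. -/
theorem ConvexOn.exists_growth {f : E → ℝ} {T : E →L[ℝ] E} {m : ℝ} (hm : 0 < m)
    (hconv : ConvexOn ℝ Set.univ f) (hf0 : f 0 = 0) (hTm : ∀ x, m * ‖x‖ ≤ ‖T x‖)
    (h : (fun x => f x - ‖T x‖ ^ 2 / 2) =o[𝓝 0] fun x => ‖x‖ ^ 2) :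
    ∃ c > 0, ∃ δ > 0, (∀ x, ‖x‖ ≤ δ → c * ‖x‖ ^ 2 ≤ f x) ∧
      ∀ x, δ ≤ ‖x‖ → c * δ * ‖x‖ ≤ f x := by
  rw [Asymptotics.isLittleO_iff] at h
  obtain ⟨r, hr, hb⟩ := Metric.eventually_nhds_iff.1 (h (c := m ^ 2 / 4) (by positivity))
  have near : ∀ x, ‖x‖ ≤ r / 2 → m ^ 2 / 4 * ‖x‖ ^ 2 ≤ f x := by
    intro x hx
    have h1 := hb (y := x) (by rw [dist_zero_right]; linarith)
    rw [Real.norm_eq_abs, Real.norm_eq_abs, abs_of_nonneg (sq_nonneg ‖x‖)] at h1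
    have h2 := (abs_le.1 h1).1
    have h3 : (m * ‖x‖) ^ 2 ≤ ‖T x‖ ^ 2 := by gcongr; exact hTm x
    nlinarith
  refine ⟨m ^ 2 / 4, by positivity, r / 2, by positivity, near, fun x hx => ?_⟩
  have hx0 : 0 < ‖x‖ := by linarith
  set a := r / 2 / ‖x‖ with ha
  have ha0 : 0 < a := by positivity
  have ha1 : a ≤ 1 := (div_le_one hx0).2 hx
  have hax : a * ‖x‖ = r / 2 := by rw [ha]; field_simp
  have h1 := hconv.2 (Set.mem_univ x) (Set.mem_univ 0) ha0.le (sub_nonneg.2 ha1) (by ring)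
  have h2 : ‖a • x‖ = r / 2 := by rw [norm_smul, Real.norm_eq_abs, abs_of_pos ha0, hax]
  have h3 := near (a • x) h2.le
  simp only [smul_zero, add_zero, hf0, smul_eq_mul, mul_zero] at h1
  rw [h2, ← hax] at h3
  rw [← hax]
  refine le_of_mul_le_mul_left ?_ ha0
  nlinarith

/-- The integral of the truncated height converges under parabolic rescaling. -/
theorem tendsto_integral_rescaled [FiniteDimensional ℝ E] [MeasurableSpace E] [BorelSpace E]
    (μ : Measure E) [IsFiniteMeasureOnCompacts μ]
    {f : E → ℝ} {T : E →L[ℝ] E} {m : ℝ} (hm : 0 < m) (hcont : Continuous f)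
    (hconv : ConvexOn ℝ Set.univ f) (hf0 : f 0 = 0) (hTm : ∀ x, m * ‖x‖ ≤ ‖T x‖)
    (h : (fun x => f x - ‖T x‖ ^ 2 / 2) =o[𝓝 0] fun x => ‖x‖ ^ 2) :
    Tendsto (fun s : ℝ => ∫ y, max (1 - f (s • y) / s ^ 2) 0 ∂μ) (𝓝[>] 0)
      (𝓝 (∫ y, max (1 - ‖T y‖ ^ 2 / 2) 0 ∂μ)) := by
  obtain ⟨c, hc, δ, hδ, hnear, hfar⟩ := hconv.exists_growth hm hf0 hTm h
  have hnonneg : ∀ x, 0 ≤ f x := fun x => by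
    rcases le_total ‖x‖ δ with hx | hx
    · exact le_trans (by positivity) (hnear x hx)
    · exact le_trans (by positivity) (hfar x hx)
  set R := max 1 (max c⁻¹ (c * δ)⁻¹) with hR
  have hR1 : 1 ≤ R := le_max_left _ _
  have hR2 : 1 ≤ c * R := by
    rw [← inv_mul_le_iff₀ hc, mul_one]; exact (le_max_left _ _).trans (le_max_right _ _)
  have hR3 : 1 ≤ c * δ * R := by
    rw [← inv_mul_le_iff₀ (by positivity), mul_one]
    exact (le_max_right _ _).trans (le_max_right _ _)
  refine tendsto_integral_filter_of_dominated_convergence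
    ((Metric.closedBall (0 : E) R).indicator fun _ => (1 : ℝ)) ?_ ?_ ?_ ?_
  · exact Eventually.of_forall fun s => (by fun_prop : Continuous _).aestronglyMeasurable
  · filter_upwards [Ioo_mem_nhdsGT (zero_lt_one : (0 : ℝ) < 1)] with s hs
    refine Eventually.of_forall fun y => ?_
    have hs0 := hs.1
    rw [Real.norm_eq_abs, abs_of_nonneg (le_max_right _ _)]
    by_cases hy : y ∈ Metric.closedBall (0 : E) R
    · rw [Set.indicator_of_mem hy]
      have := hnonneg (s • y)
      exact max_le (sub_le_self _ (by positivity)) zero_le_one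
    · rw [Set.indicator_of_notMem hy]
      rw [mem_closedBall_zero_iff, not_le] at hy
      refine max_le (sub_nonpos.2 ((one_le_div (by positivity)).2 ?_)) le_rfl
      have hn : ‖s • y‖ = s * ‖y‖ := by rw [norm_smul, Real.norm_eq_abs, abs_of_pos hs0]
      have hsy : s * R ≤ ‖s • y‖ := by rw [hn]; gcongr
      rcases le_total ‖s • y‖ δ with hx | hx
      · refine le_trans ?_ (hnear _ hx)
        calc s ^ 2 ≤ c * R * R * s ^ 2 := by
              have : 1 ≤ c * R * R := one_le_mul_of_one_le_of_one_le hR2 hR1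
              nlinarith [sq_nonneg s]
          _ = c * (s * R) ^ 2 := by ring
          _ ≤ _ := by gcongr
      · refine le_trans ?_ (hfar _ hx)
        calc s ^ 2 ≤ c * δ * R * s := by nlinarith [hs.2]
          _ = c * δ * (s * R) := by ring
          _ ≤ _ := by gcongr
  · rw [integrable_indicator_iff measurableSet_closedBall]
    exact continuousOn_const.integrableOn_compact (isCompact_closedBall _ _)
  · refine Eventually.of_forall fun y => ?_
    exact ((tendsto_div_sq_of_isLittleO h y).const_sub 1).max tendsto_const_nhds

end QuadraticModel

section Integrals

variable {E : Type*} [NormedAddCommGroup E] [NormedSpace ℝ E] [FiniteDimensional ℝ E]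
  [MeasurableSpace E] [BorelSpace E]

theorem setIntegral_sublevel_eq (μ : Measure E) [μ.IsAddHaarMeasure] {f : E → ℝ}
    (hf : Continuous f) {s : ℝ} (hs : 0 < s) :
    ∫ x in {x | f x < s ^ 2}, (s ^ 2 - f x) ∂μ =
      s ^ (Module.finrank ℝ E + 2) * ∫ y, max (1 - f (s • y) / s ^ 2) 0 ∂μ := by
  have h := Measure.integral_comp_smul μ (fun x => max (1 - f x / s ^ 2) 0) s
  rw [h, abs_of_pos (by positivity), smul_eq_mul, pow_add, mul_comm (s ^ _) (s ^ 2), mul_assoc,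
    mul_inv_cancel_left₀ (by positivity), ← integral_const_mul,
    ← integral_indicator (isOpen_lt hf continuous_const).measurableSet]
  refine integral_congr_ae (Eventually.of_forall fun x => ?_)
  have hx : s ^ 2 * max (1 - f x / s ^ 2) 0 = max (s ^ 2 - f x) 0 := by
    rw [mul_max_of_nonneg _ _ (by positivity), mul_zero, mul_sub, mul_div_cancel₀ _ (by positivity),
      mul_one]
  simp only [hx]
  by_cases hlt : f x < s ^ 2
  · rw [Set.indicator_of_mem (by exact hlt), max_eq_left (by linarith)]
  · rw [Set.indicator_of_notMem (by exact hlt), max_eq_right (by linarith)]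

theorem integral_comp_linearMap (μ : Measure E) [μ.IsAddHaarMeasure] {T : E →ₗ[ℝ] E}
    (hT : LinearMap.det T ≠ 0) {g : E → ℝ} (hg : Continuous g) :
    ∫ x, g (T x) ∂μ = |LinearMap.det T|⁻¹ * ∫ x, g x ∂μ := by
  have hmap := Measure.map_linearMap_addHaar_eq_smul_addHaar μ hT
  have hTm : Measurable T := T.continuous_of_finiteDimensional.measurable
  rw [← integral_map hTm.aemeasurable hg.aestronglyMeasurable, hmap,
    integral_smul_measure, ENNReal.toReal_ofReal (abs_nonneg _), abs_inv, smul_eq_mul]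

theorem integral_max_one_sub_norm_sq (μ : Measure E) [μ.IsAddHaarMeasure] [Nontrivial E] :
    ∫ x, max (1 - ‖x‖ ^ 2) 0 ∂μ =
      2 * μ.real (Metric.ball 0 1) / (Module.finrank ℝ E + 2) := by
  rw [integral_fun_norm_addHaar μ fun r => max (1 - r ^ 2) 0]
  have hn : 0 < Module.finrank ℝ E := Module.finrank_pos
  obtain ⟨k, hk⟩ := Nat.exists_eq_succ_of_ne_zero hn.ne'
  rw [hk]
  have h1 : ∫ y in Set.Ioi (0 : ℝ), y ^ (k.succ - 1) • max (1 - y ^ 2) 0 =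
      ∫ y in (0 : ℝ)..1, (y ^ k - y ^ (k + 2)) := by
    rw [intervalIntegral.integral_of_le zero_le_one,
      setIntegral_eq_of_subset_of_forall_sdiff_eq_zero measurableSet_Ioi
        (Set.Ioc_subset_Ioi_self : Set.Ioc (0 : ℝ) 1 ⊆ Set.Ioi 0)]
    · refine setIntegral_congr_fun measurableSet_Ioc fun y hy => ?_
      have : y ^ 2 ≤ 1 := pow_le_one₀ hy.1.le hy.2
      simp only [Nat.succ_sub_one, smul_eq_mul]
      rw [max_eq_left (by linarith)]
      ring
    · rintro y ⟨hy0, hy⟩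
      have hy1 : 1 < y := by
        by_contra! hle
        exact hy ⟨hy0, hle⟩
      rw [max_eq_right (by nlinarith), smul_zero]
  rw [h1, intervalIntegral.integral_sub (by simp) (by simp), integral_pow, integral_pow]
  simp only [nsmul_eq_mul, smul_eq_mul]
  push_cast
  simp
  field_simp
  ring

theorem integral_max_one_sub_norm_map_sq (μ : Measure E) [μ.IsAddHaarMeasure] [Nontrivial E]
    {T : E →L[ℝ] E} (hT : LinearMap.det (T : E →ₗ[ℝ] E) ≠ 0) :
    ∫ x, max (1 - ‖T x‖ ^ 2 / 2) 0 ∂μ =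
      √2 ^ (Module.finrank ℝ E + 2) * μ.real (Metric.ball 0 1) /
        ((Module.finrank ℝ E + 2) * |LinearMap.det (T : E →ₗ[ℝ] E)|) := by
  have h1 := integral_comp_linearMap μ hT
    (g := fun x => max (1 - ‖x‖ ^ 2 / 2) 0) (by fun_prop)
  simp only [ContinuousLinearMap.coe_coe] at h1
  have h2 := Measure.integral_comp_smul μ (fun x => max (1 - ‖x‖ ^ 2) 0) (√2)⁻¹
  have h3 : ∀ x : E, ‖(√2)⁻¹ • x‖ ^ 2 = ‖x‖ ^ 2 / 2 := fun x => by
    rw [norm_smul, mul_pow, Real.norm_eq_abs, sq_abs, inv_pow, Real.sq_sqrt zero_le_two]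
    ring
  simp only [h3] at h2
  rw [h1, h2, integral_max_one_sub_norm_sq, inv_pow, inv_inv, abs_of_nonneg (a := √2 ^ _) (by positivity),
    smul_eq_mul, pow_add, Real.sq_sqrt zero_le_two]
  field_simp

end Integrals

section Hessian

open scoped MatrixOrder in
theorem Matrix.PosDef.exists_conjTranspose_mul_self {ι : Type*} [Fintype ι] [DecidableEq ι]
    {A : Matrix ι ι ℝ} (hA : A.PosDef) : ∃ B : Matrix ι ι ℝ, A = B.conjTranspose * B :=
  CStarAlgebra.nonneg_iff_eq_star_mul_self.mp hA.posSemidef.nonneg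

theorem fderiv_fderiv_eq_hessianMatrix {n : ℕ} (f : EuclideanSpace ℝ (Fin n) → ℝ)
    (z x y : EuclideanSpace ℝ (Fin n)) :
    fderiv ℝ (fderiv ℝ f) z x y = x.ofLp ⬝ᵥ (hessianMatrix f z).mulVec y.ofLp := by
  have hx : ∀ x : EuclideanSpace ℝ (Fin n), x = ∑ i, x i • EuclideanSpace.single i 1 := fun x => by
    simpa using ((EuclideanSpace.basisFun (Fin n) ℝ).sum_repr x).symm
  conv_lhs => rw [hx x, hx y]
  simp only [map_sum, map_smul, _root_.sum_apply, _root_.smul_apply,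
    smul_eq_mul, dotProduct, Matrix.mulVec, hessianMatrix, Matrix.of_apply,
    iteratedFDeriv_two_apply, Matrix.cons_val_zero, Matrix.cons_val_one, Finset.mul_sum]
  rw [Finset.sum_comm]
  refine Finset.sum_congr rfl fun i _ => Finset.sum_congr rfl fun j _ => ?_
  ring

/-- A positive definite Hessian is the pullback of the inner product by a linear map. -/
theorem exists_linearMap_of_hessianMatrix_posDef {n : ℕ} {f : EuclideanSpace ℝ (Fin n) → ℝ}
    {z : EuclideanSpace ℝ (Fin n)} (h : (hessianMatrix f z).PosDef) :
    ∃ T : EuclideanSpace ℝ (Fin n) →L[ℝ] EuclideanSpace ℝ (Fin n),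
      (∀ x y, fderiv ℝ (fderiv ℝ f) z x y = ⟪T x, T y⟫) ∧
      LinearMap.det (T : EuclideanSpace ℝ (Fin n) →ₗ[ℝ] EuclideanSpace ℝ (Fin n)) ≠ 0 ∧
      |LinearMap.det (T : EuclideanSpace ℝ (Fin n) →ₗ[ℝ] EuclideanSpace ℝ (Fin n))| =
        √(hessianMatrix f z).det := by
  obtain ⟨B, hB⟩ := h.exists_conjTranspose_mul_self
  have hdet : LinearMap.det (B.toEuclideanLin) = B.det := by
    rw [Matrix.toEuclideanLin_eq_toLin_orthonormal, LinearMap.det_toLin]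
  have hsq : (hessianMatrix f z).det = B.det ^ 2 := by
    rw [hB, Matrix.det_mul, Matrix.det_conjTranspose, star_trivial, sq]
  have hpos := h.det_pos
  refine ⟨B.toEuclideanLin.toContinuousLinearMap, fun x y => ?_, ?_, ?_⟩
  · rw [fderiv_fderiv_eq_hessianMatrix, hB, ← Matrix.mulVec_mulVec, Matrix.dotProduct_mulVec,
      Matrix.vecMul_conjTranspose]
    simp [EuclideanSpace.inner_eq_star_dotProduct, dotProduct_comm]
  · rw [LinearMap.coe_toContinuousLinearMap, hdet]
    intro h0
    simp [hsq, h0] at hpos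
  · rw [LinearMap.coe_toContinuousLinearMap, hdet, hsq, Real.sqrt_sq_eq_abs]

theorem exists_pos_mul_norm_le_of_det_ne_zero {E : Type*} [NormedAddCommGroup E] [NormedSpace ℝ E]
    [FiniteDimensional ℝ E] {T : E →L[ℝ] E} (hT : LinearMap.det (T : E →ₗ[ℝ] E) ≠ 0) :
    ∃ m > 0, ∀ x, m * ‖x‖ ≤ ‖T x‖ := by
  obtain ⟨K, hK, hlip⟩ := (T : E →ₗ[ℝ] E).exists_antilipschitzWith
    (LinearMap.ker_eq_bot.2 (LinearMap.equivOfDetNeZero _ hT).injective)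
  refine ⟨(K : ℝ)⁻¹, by positivity, fun x => ?_⟩
  rw [inv_mul_le_iff₀ (by positivity)]
  simpa using hlip.le_mul_dist x 0

end Hessian

theorem volume_region_limit (n : ℕ) (hn : 1 ≤ n) (f : EuclideanSpace ℝ (Fin n) → ℝ)
    (hf : ContDiff ℝ (⊤ : ℕ∞) f) (hconv : ConvexOn ℝ Set.univ f)
    (hf0 : f 0 = 0) (hgrad : gradient f 0 = 0)
    (hhess : (hessianMatrix f 0).PosDef) :
    Tendsto (fun t : ℝ => t ^ (-((n : ℝ) + 2) / 2) * ∫ x in {x | f x < t}, (t - f x))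
      (𝓝[>] 0)
      (𝓝 (Real.sqrt 2 ^ (n + 2) *
        (volume (Metric.ball (0 : EuclideanSpace ℝ (Fin n)) 1)).toReal /
        (((n : ℝ) + 2) * Real.sqrt (hessianMatrix f 0).det))) := by
  have : Nonempty (Fin n) := ⟨⟨0, hn⟩⟩
  obtain ⟨T, hT, hdet0, hdet⟩ := exists_linearMap_of_hessianMatrix_posDef hhess
  obtain ⟨m, hm, hTm⟩ := exists_pos_mul_norm_le_of_det_ne_zero hdet0
  have hd : fderiv ℝ f 0 = 0 := by rw [← toDual_gradient, hgrad, map_zero]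
  have hf' : DifferentiableAt ℝ (fderiv ℝ f) 0 :=
    (hf.fderiv_right (m := 1) (by norm_cast)).differentiable one_ne_zero 0
  have hlim := tendsto_integral_rescaled volume hm hf.continuous hconv hf0 hTm
    (isLittleO_sub_half_norm_sq (hf.differentiable (by simp)) hf' hf0 hd hT)
  rw [integral_max_one_sub_norm_map_sq volume hdet0, hdet, finrank_euclideanSpace_fin] at hlim
  have hsqrt : Tendsto Real.sqrt (𝓝[>] 0) (𝓝[>] 0) := by
    refine tendsto_nhdsWithin_iff.2 ⟨?_, ?_⟩
    · simpa using (Real.continuous_sqrt.tendsto 0).mono_left nhdsWithin_le_nhds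
    · filter_upwards [self_mem_nhdsWithin] with t ht using Real.sqrt_pos.2 ht
  refine (hlim.comp hsqrt).congr' ?_
  filter_upwards [self_mem_nhdsWithin] with t (ht : 0 < t)
  have h := setIntegral_sublevel_eq volume hf.continuous (Real.sqrt_pos.2 ht)
  rw [Real.sq_sqrt ht.le, finrank_euclideanSpace_fin] at h
  have hpow : t ^ (-((n : ℝ) + 2) / 2) * √t ^ (n + 2) = 1 := by
    rw [Real.sqrt_eq_rpow, ← Real.rpow_natCast, ← Real.rpow_mul ht.le, ← Real.rpow_add ht]
    push_cast
    ring_nf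
    exact Real.rpow_zero t
  rw [h, ← mul_assoc, hpow, one_mul, Function.comp_apply, Real.sq_sqrt ht.le]
end

section
/- Let n ≥ 1 and let f : ℝⁿ → ℝ be a smooth convex function whose Hessian D²f(x) is positive definite at every x ∈ ℝⁿ. Suppose there exists a nonnegative function φ : (0,∞) → ℝ such that V*_x(k) = φ(k) for all x ∈ ℝⁿ and all k > 0, where V*_x(k) = ∫_{{y : f(y) < f(x) + ⟨∇f(x), y − x⟩ + k}} (f(x) + ⟨∇f(x), y − x⟩ + k − f(y)) dy. Then the graph of f is an elliptic paraboloid, i.e. there exist a positive definite symmetric n×n matrix A, a vector b ∈ ℝⁿ and a constant c ∈ ℝ such that f(x) = ⟨x, A x⟩ + ⟨b, x⟩ + c for all x ∈ ℝⁿ. -/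
open MeasureTheory Filter
open scoped RealInnerProductSpace Topology

section DirectionalDerivatives

variable {E : Type*} [NormedAddCommGroup E] [NormedSpace ℝ E]

/-- The derivative of `h` in the direction `v`. -/
noncomputable def dirDeriv (v : E) (h : E → ℝ) : E → ℝ := fun x => fderiv ℝ h x v

lemma dirDeriv_add_left (u v : E) (h : E → ℝ) (x : E) :
    dirDeriv (u + v) h x = dirDeriv u h x + dirDeriv v h x := by
  simp [dirDeriv]

lemma dirDeriv_neg_left (v : E) (h : E → ℝ) (x : E) :
    dirDeriv (-v) h x = -dirDeriv v h x := by
  simp [dirDeriv]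

lemma dirDeriv_smul_left (a : ℝ) (v : E) (h : E → ℝ) (x : E) :
    dirDeriv (a • v) h x = a * dirDeriv v h x := by
  simp [dirDeriv]

lemma dirDeriv_sum_left {ι : Type*} (s : Finset ι) (v : ι → E) (h : E → ℝ) (x : E) :
    dirDeriv (∑ i ∈ s, v i) h x = ∑ i ∈ s, dirDeriv (v i) h x := by
  simp [dirDeriv]

variable {U : Set E} {h : E → ℝ}

lemma ContDiffOn.dirDeriv (hU : IsOpen U) (hh : ContDiffOn ℝ (⊤ : ℕ∞) h U) (v : E) :
    ContDiffOn ℝ (⊤ : ℕ∞) (dirDeriv v h) U :=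
  (hh.fderiv_of_isOpen hU (m := (⊤ : ℕ∞)) (by simp)).clm_apply contDiffOn_const

lemma dirDeriv_congr (hU : IsOpen U) {h' : E → ℝ} (hh : Set.EqOn h h' U) (v : E) :
    Set.EqOn (dirDeriv v h) (dirDeriv v h') U := fun x hx => by
  have : h =ᶠ[𝓝 x] h' := Filter.eventuallyEq_of_mem (hU.mem_nhds hx) hh
  simp [_root_.dirDeriv, this.fderiv_eq]

lemma dirDeriv_comm (hU : IsOpen U) (hh : ContDiffOn ℝ (⊤ : ℕ∞) h U) (u v : E) :
    Set.EqOn (dirDeriv u (dirDeriv v h)) (dirDeriv v (dirDeriv u h)) U := fun x hx => by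
  have hx' : ContDiffAt ℝ (⊤ : ℕ∞) h x := hh.contDiffAt (hU.mem_nhds hx)
  have hd : DifferentiableAt ℝ (fderiv ℝ h) x :=
    ((hh.fderiv_of_isOpen hU (m := (⊤ : ℕ∞)) (by simp)).contDiffAt
      (hU.mem_nhds hx)).differentiableAt (by simp)
  have key : ∀ a b : E, _root_.dirDeriv a (_root_.dirDeriv b h) x
      = fderiv ℝ (fderiv ℝ h) x a b := fun a b => by
    have := (hd.hasFDerivAt.clm_apply (hasFDerivAt_const b x)).fderiv
    unfold _root_.dirDeriv
    rw [this]; simp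
  rw [key, key]
  exact (hx'.isSymmSndFDerivAt (by simpa using WithTop.coe_le_coe.mpr (le_top : (2 : ℕ∞) ≤ ⊤))).eq
    u v

lemma hasDerivAt_comp_line (hU : IsOpen U) (hh : ContDiffOn ℝ (⊤ : ℕ∞) h U) {x v : E} {s : ℝ}
    (hx : x + s • v ∈ U) :
    HasDerivAt (fun r : ℝ => h (x + r • v)) (dirDeriv v h (x + s • v)) s := by
  have h1 : HasFDerivAt h (fderiv ℝ h (x + s • v)) (x + s • v) :=
    ((hh.contDiffAt (hU.mem_nhds hx)).differentiableAt (by simp)).hasFDerivAt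
  have h2 : HasDerivAt (fun r : ℝ => x + r • v) v s := by
    simpa using ((hasDerivAt_id s).smul_const v).const_add x
  exact h1.comp_hasDerivAt s h2

end DirectionalDerivatives

section SecondDerivative

/-- `k` is differentiable near `s`, with derivative `d₁` at `s`, and has second derivative `d₂`
at `s`. -/
def HasSecondDerivAt (k : ℝ → ℝ) (d₂ s : ℝ) : Prop :=
  ∃ k' : ℝ → ℝ, (∀ᶠ r in 𝓝 s, HasDerivAt k (k' r) r) ∧ HasDerivAt k' d₂ s

namespace HasSecondDerivAt

variable {k l : ℝ → ℝ} {a b s : ℝ}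

lemma add (hk : HasSecondDerivAt k a s) (hl : HasSecondDerivAt l b s) :
    HasSecondDerivAt (fun r => k r + l r) (a + b) s := by
  obtain ⟨k', h1, h2⟩ := hk
  obtain ⟨l', h3, h4⟩ := hl
  exact ⟨fun r => k' r + l' r, by filter_upwards [h1, h3] with r hr hr' using hr.add hr', h2.add h4⟩

lemma const_mul (c : ℝ) (hk : HasSecondDerivAt k a s) :
    HasSecondDerivAt (fun r => c * k r) (c * a) s := by
  obtain ⟨k', h1, h2⟩ := hk
  exact ⟨fun r => c * k' r, by filter_upwards [h1] with r hr using hr.const_mul c, h2.const_mul c⟩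

lemma mul (hk : HasSecondDerivAt k a s) (hl : HasSecondDerivAt l b s) :
    HasSecondDerivAt (fun r => k r * l r) (a * l s + 2 * deriv k s * deriv l s + k s * b) s := by
  obtain ⟨k', h1, h2⟩ := hk
  obtain ⟨l', h3, h4⟩ := hl
  refine ⟨fun r => k' r * l r + k r * l' r, ?_, ?_⟩
  · filter_upwards [h1, h3] with r hr hr' using hr.mul hr'
  · have e1 := h1.self_of_nhds
    have e2 := h3.self_of_nhds
    convert! (h2.mul e2).add (e1.mul h4) using 1
    rw [e1.deriv, e2.deriv]; ring

lemma const (c s : ℝ) : HasSecondDerivAt (fun _ => c) 0 s :=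
  ⟨fun _ => 0, .of_forall fun r => hasDerivAt_const r c, hasDerivAt_const s 0⟩

lemma id (s : ℝ) : HasSecondDerivAt (fun r => r) 0 s :=
  ⟨fun _ => 1, .of_forall fun r => hasDerivAt_id r, hasDerivAt_const s 1⟩

lemma nonneg (hk : HasSecondDerivAt k a s) (h0 : k s = 0) (hn : ∀ᶠ r in 𝓝 s, 0 ≤ k r) :
    0 ≤ a := by
  by_contra! ha
  obtain ⟨k', h1, h2⟩ := hk
  have hd : deriv k =ᶠ[𝓝 s] k' := by filter_upwards [h1] with r hr using hr.deriv
  have hmin : IsLocalMin k s := by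
    filter_upwards [hn] with r hr
    rw [h0]; exact hr
  have hmax : IsLocalMax k s := by
    refine isLocalMax_of_deriv_deriv_neg ?_ hmin.deriv_eq_zero h1.self_of_nhds.continuousAt
    rw [hd.deriv_eq, h2.deriv]; exact ha
  have hz : k =ᶠ[𝓝 s] fun _ => 0 := by
    filter_upwards [hn, hmax] with r hr hr'
    exact le_antisymm (by rw [h0] at hr'; exact hr') hr
  have hz' : k' =ᶠ[𝓝 s] fun _ => 0 := by
    filter_upwards [hd, hz.deriv] with r hr hr'
    rw [← hr, hr']; simp
  have := h2.unique ((hasDerivAt_const s (0 : ℝ)).congr_of_eventuallyEq hz')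
  exact ha.ne this

end HasSecondDerivAt

lemma hasSecondDerivAt_comp_line {E : Type*} [NormedAddCommGroup E] [NormedSpace ℝ E] {U : Set E}
    {h : E → ℝ} (hU : IsOpen U) (hh : ContDiffOn ℝ (⊤ : ℕ∞) h U) {x : E} (v : E) (hx : x ∈ U) :
    HasSecondDerivAt (fun r : ℝ => h (x + r • v)) (dirDeriv v (dirDeriv v h) x) 0 := by
  refine ⟨fun r => dirDeriv v h (x + r • v), ?_, ?_⟩
  · have : ∀ᶠ r : ℝ in 𝓝 0, x + r • v ∈ U := by
      have hc : ContinuousAt (fun r : ℝ => x + r • v) 0 := by fun_prop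
      exact hc.eventually_mem (hU.mem_nhds (by simpa using hx))
    filter_upwards [this] with r hr using hasDerivAt_comp_line hU hh hr
  · simpa using hasDerivAt_comp_line hU (hh.dirDeriv hU v) (x := x) (v := v) (s := 0)
      (by simpa using hx)

end SecondDerivative

section Determinant

lemma hasDerivAt_det {n : ℕ} {N : ℝ → Matrix (Fin n) (Fin n) ℝ} {N' : Matrix (Fin n) (Fin n) ℝ}
    {s : ℝ} (hN : ∀ i j, HasDerivAt (fun r => N r i j) (N' i j) s) :
    HasDerivAt (fun r => (N r).det) ((N s).adjugate * N').trace s := by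
  have h1 : HasDerivAt (fun r => (N r).det)
      (∑ σ : Equiv.Perm (Fin n), ((Equiv.Perm.sign σ : ℤ) : ℝ) *
        ∑ i, (∏ j ∈ Finset.univ.erase i, N s (σ j) j) • N' (σ i) i) s := by
    simp_rw [Matrix.det_apply']
    refine HasDerivAt.fun_sum fun σ _ => HasDerivAt.const_mul _ ?_
    exact HasDerivAt.fun_finsetProd fun i _ => hN (σ i) i
  convert h1 using 1
  have h2 : ∀ i, ((N s).adjugate * N') i i = ((N s).updateCol i (fun k => N' k i)).det := by
    intro i
    rw [← Matrix.cramer_apply, Matrix.cramer_eq_adjugate_mulVec]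
    rfl
  simp_rw [Matrix.trace, Matrix.diag, h2, Matrix.det_apply', Finset.mul_sum]
  rw [Finset.sum_comm]
  refine Finset.sum_congr rfl fun σ _ => Finset.sum_congr rfl fun i _ => ?_
  congr 1
  rw [← Finset.mul_prod_erase Finset.univ _ (Finset.mem_univ i), mul_comm, smul_eq_mul]
  congr 1
  · exact Finset.prod_congr rfl fun j hj => by simp [Finset.ne_of_mem_erase hj]
  · simp

/-- Along a path of matrices of determinant one through the identity, the first derivative is
trace-free and the second derivative has the trace of the squared first derivative. -/
lemma trace_derivs_of_det_eq_one {n : ℕ} {N N' : ℝ → Matrix (Fin n) (Fin n) ℝ}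
    {N'' : Matrix (Fin n) (Fin n) ℝ}
    (hN : ∀ᶠ s in 𝓝 0, ∀ i j, HasDerivAt (fun r => N r i j) (N' s i j) s)
    (hN' : ∀ i j, HasDerivAt (fun r => N' r i j) (N'' i j) 0)
    (h0 : N 0 = 1) (hdet : ∀ᶠ s in 𝓝 0, (N s).det = 1) :
    (N' 0).trace = 0 ∧ N''.trace = (N' 0 * N' 0).trace := by
  have hdet' := eventually_eventually_nhds.mpr hdet
  have htr : ∀ᶠ s in 𝓝 0, ((N s).adjugate * N' s).trace = 0 := by
    filter_upwards [hN, hdet'] with s hs hs'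
    have h1 := hasDerivAt_det hs
    have h2 : (fun r => (N r).det) =ᶠ[𝓝 s] fun _ => (1 : ℝ) := hs'
    exact h1.unique ((hasDerivAt_const s (1 : ℝ)).congr_of_eventuallyEq h2)
  have h01 := hN.self_of_nhds
  refine ⟨by simpa [h0] using htr.self_of_nhds, ?_⟩
  have hadj : ∀ i j, ∃ R, HasDerivAt (fun r => (N r).adjugate i j) R 0 := fun i j => by
    simp_rw [Matrix.adjugate_apply, Matrix.det_apply']
    have : ∀ a b, DifferentiableAt ℝ (fun r => (N r).updateRow j (Pi.single i 1) a b) 0 := by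
      intro a b
      by_cases h : a = j
      · subst h; simp
      · simpa [Matrix.updateRow_ne h] using (h01 a b).differentiableAt
    refine ⟨_, DifferentiableAt.hasDerivAt ?_⟩
    refine DifferentiableAt.fun_sum fun σ _ => DifferentiableAt.const_mul ?_ _
    exact DifferentiableAt.fun_finsetProd fun i _ => this _ _
  choose R hR using hadj
  have hR' : Matrix.of R = -N' 0 := by
    ext i j
    have h1 : HasDerivAt (fun r => ((N r).adjugate * N r) i j)
        (∑ k, (R i k * N 0 k j + (N 0).adjugate i k * N' 0 k j)) 0 := by
      simp_rw [Matrix.mul_apply]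
      exact HasDerivAt.fun_sum fun k _ => (hR i k).mul (h01 k j)
    have h2 : (fun r => ((N r).adjugate * N r) i j) =ᶠ[𝓝 0]
        fun _ => (1 : Matrix (Fin n) (Fin n) ℝ) i j := by
      filter_upwards [hdet] with r hr
      rw [Matrix.adjugate_mul, hr, one_smul]
    have h3 := h1.unique ((hasDerivAt_const (0 : ℝ) _).congr_of_eventuallyEq h2)
    simp only [h0, Matrix.adjugate_one, Matrix.one_apply, Finset.sum_add_distrib, mul_ite, mul_one,
      mul_zero, ite_mul, one_mul, zero_mul, Finset.sum_ite_eq, Finset.sum_ite_eq',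
      Finset.mem_univ, if_true] at h3
    simp only [Matrix.of_apply, Matrix.neg_apply]
    linarith
  have h4 : HasDerivAt (fun r => ((N r).adjugate * N' r).trace)
      (∑ i, ∑ k, (R i k * N' 0 k i + (N 0).adjugate i k * N'' k i)) 0 := by
    simp_rw [Matrix.trace, Matrix.diag, Matrix.mul_apply]
    exact HasDerivAt.fun_sum fun i _ => HasDerivAt.fun_sum fun k _ => (hR i k).mul (hN' k i)
  have h5 := h4.unique ((hasDerivAt_const (0 : ℝ) (0 : ℝ)).congr_of_eventuallyEq htr)
  have h6 : ∑ i, ∑ k, (R i k * N' 0 k i + (N 0).adjugate i k * N'' k i)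
      = (Matrix.of R * N' 0).trace + ((N 0).adjugate * N'').trace := by
    simp [Matrix.trace, Matrix.mul_apply, Finset.sum_add_distrib]
  rw [h6, hR', h0] at h5
  simp at h5
  linarith

end Determinant

section PositiveKernel

variable {E : Type*} [NormedAddCommGroup E] [NormedSpace ℝ E] {U : Set E} {K : E → ℝ} {θ : E}

/-- The kernel `(p, q) ↦ K (θ + p + q)` is conditionally positive semidefinite on `U`. -/
def IsCondPosKernel (U : Set E) (K : E → ℝ) (θ : E) : Prop :=
  ∀ (c : Fin 4 → ℝ) (p : Fin 4 → E), ∑ i, c i = 0 → (∀ i j, θ + p i + p j ∈ U) →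
    0 ≤ ∑ i, ∑ j, c i * c j * K (θ + p i + p j)

lemma IsCondPosKernel.hessian_nonneg (hU : IsOpen U) (hK : ContDiffOn ℝ (⊤ : ℕ∞) K U)
    (hpos : IsCondPosKernel U K θ) (u w q : E) (h0 : θ ∈ U) (h1 : θ + q ∈ U)
    (h2 : θ + (2 : ℝ) • q ∈ U) :
    0 ≤ dirDeriv u (dirDeriv u K) θ + 2 * dirDeriv u (dirDeriv w K) (θ + q)
      + dirDeriv w (dirDeriv w K) (θ + (2 : ℝ) • q) := by
  set p : ℝ → Fin 4 → E := fun r => ![r • u, 0, r • w + q, q] with hp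
  set c : Fin 4 → ℝ := ![1, -1, 1, -1] with hc
  have hmem : ∀ᶠ r in 𝓝 (0 : ℝ), ∀ i j, θ + p r i + p r j ∈ U := by
    have hcont : ∀ i, Continuous fun r => p r i := by
      intro i; fin_cases i <;> simp [hp] <;> fun_prop
    refine eventually_all.mpr fun i => eventually_all.mpr fun j => ?_
    have hij : ContinuousAt (fun r => θ + p r i + p r j) 0 :=
      ((continuous_const.add (hcont i)).add (hcont j)).continuousAt
    refine hij.eventually_mem (hU.mem_nhds ?_)
    have h3 : θ + q + q ∈ U := by convert h2 using 1; module
    fin_cases i <;> fin_cases j <;> simpa [hp]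
  set W : ℝ → ℝ := fun r =>
    ((K (θ + r • ((2 : ℝ) • u)) + (-2) * K (θ + r • u)) + K θ) +
    (2 * ((K (θ + q + r • (u + w)) + (-1) * K (θ + q + r • u)) +
      ((-1) * K (θ + q + r • w) + K (θ + q))) +
    ((K (θ + (2 : ℝ) • q + r • ((2 : ℝ) • w)) + (-2) * K (θ + (2 : ℝ) • q + r • w)) +
      K (θ + (2 : ℝ) • q))) with hW
  have hWeq : ∀ r, W r = ∑ i, ∑ j, c i * c j * K (θ + p r i + p r j) := by
    intro r
    have e1 : θ + r • u + r • u = θ + r • ((2 : ℝ) • u) := by module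
    have e2 : θ + r • u + (r • w + q) = θ + q + r • (u + w) := by module
    have e3 : θ + r • u + q = θ + q + r • u := by module
    have e4 : θ + (r • w + q) + r • u = θ + q + r • (u + w) := by module
    have e5 : θ + (r • w + q) + (r • w + q) = θ + (2 : ℝ) • q + r • ((2 : ℝ) • w) := by module
    have e6 : θ + (r • w + q) + q = θ + (2 : ℝ) • q + r • w := by module
    have e7 : θ + q + (r • w + q) = θ + (2 : ℝ) • q + r • w := by module
    have e8 : θ + q + q = θ + (2 : ℝ) • q := by module
    have e9 : θ + (r • w + q) = θ + q + r • w := by module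
    simp only [hW, hp, hc, Fin.sum_univ_four, Matrix.cons_val_zero, Matrix.cons_val_one,
      Matrix.cons_val, add_zero, e1, e2, e3, e4, e5, e6, e7, e8]
    simp only [e9]
    ring
  have hsec : HasSecondDerivAt W _ 0 :=
    (((hasSecondDerivAt_comp_line hU hK ((2 : ℝ) • u) h0).add
      ((hasSecondDerivAt_comp_line hU hK u h0).const_mul (-2))).add (.const (K θ) 0)).add
    (((((hasSecondDerivAt_comp_line hU hK (u + w) h1).add
      ((hasSecondDerivAt_comp_line hU hK u h1).const_mul (-1))).add
      (((hasSecondDerivAt_comp_line hU hK w h1).const_mul (-1)).add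
        (.const (K (θ + q)) 0))).const_mul 2).add
    (((hasSecondDerivAt_comp_line hU hK ((2 : ℝ) • w) h2).add
      ((hasSecondDerivAt_comp_line hU hK w h2).const_mul (-2))).add
        (.const (K (θ + (2 : ℝ) • q)) 0)))
  have hn := hsec.nonneg (by simp [hW]; ring) (by
    filter_upwards [hmem] with r hr
    rw [hWeq]
    exact hpos c (p r) (by simp [hc, Fin.sum_univ_four]) hr)
  have hsmul : ∀ (v x : E), x ∈ U →
      dirDeriv ((2 : ℝ) • v) (dirDeriv ((2 : ℝ) • v) K) x = 4 * dirDeriv v (dirDeriv v K) x := by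
    intro v x hx
    rw [dirDeriv_smul_left, dirDeriv_comm hU hK _ _ hx, dirDeriv_smul_left]; ring
  have hadd : dirDeriv (u + w) (dirDeriv (u + w) K) (θ + q) =
      dirDeriv u (dirDeriv u K) (θ + q) + 2 * dirDeriv u (dirDeriv w K) (θ + q)
        + dirDeriv w (dirDeriv w K) (θ + q) := by
    rw [dirDeriv_add_left, dirDeriv_comm hU hK _ _ h1, dirDeriv_add_left,
      dirDeriv_comm hU hK _ (u + w) h1, dirDeriv_add_left, dirDeriv_comm hU hK w u h1]
    ring
  rw [hsmul u θ h0, hsmul w _ h2, hadd] at hn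
  linarith

lemma IsCondPosKernel.fourth_deriv_nonneg (hU : IsOpen U) (hK : ContDiffOn ℝ (⊤ : ℕ∞) K U)
    (hpos : IsCondPosKernel U K θ) (h0 : θ ∈ U) (a v c : E) :
    0 ≤ dirDeriv a (dirDeriv a K) θ + 2 * dirDeriv v (dirDeriv a (dirDeriv c K)) θ
      + dirDeriv v (dirDeriv v (dirDeriv c (dirDeriv c K))) θ := by
  have hac := (hK.dirDeriv hU c).dirDeriv hU a
  have hcc := (hK.dirDeriv hU c).dirDeriv hU c
  set W : ℝ → ℝ := fun r =>
    (r * r * dirDeriv a (dirDeriv a K) θ + (-2) * dirDeriv a (dirDeriv c K) θ * r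
      + dirDeriv c (dirDeriv c K) θ) +
    (2 * (r * dirDeriv a (dirDeriv c K) (θ + r • v)) +
      (-2) * dirDeriv c (dirDeriv c K) (θ + r • v) +
      dirDeriv c (dirDeriv c K) (θ + r • ((2 : ℝ) • v))) with hW
  have hn : ∀ᶠ r in 𝓝 (0 : ℝ), 0 ≤ W r := by
    have m1 : ∀ᶠ r in 𝓝 (0 : ℝ), θ + r • v ∈ U :=
      ContinuousAt.eventually_mem (by fun_prop) (hU.mem_nhds (by simpa))
    have m2 : ∀ᶠ r in 𝓝 (0 : ℝ), θ + (2 : ℝ) • (r • v) ∈ U :=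
      ContinuousAt.eventually_mem (by fun_prop) (hU.mem_nhds (by simpa))
    filter_upwards [m1, m2] with r hr1 hr2
    have h := hpos.hessian_nonneg hU hK (r • a + -c) c (r • v) h0 hr1 hr2
    have e1 : dirDeriv (r • a + -c) (dirDeriv (r • a + -c) K) θ =
        r * r * dirDeriv a (dirDeriv a K) θ - 2 * r * dirDeriv a (dirDeriv c K) θ
          + dirDeriv c (dirDeriv c K) θ := by
      rw [dirDeriv_add_left, dirDeriv_smul_left, dirDeriv_neg_left,
        dirDeriv_comm hU hK a _ h0, dirDeriv_add_left, dirDeriv_comm hU hK c _ h0,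
        dirDeriv_add_left, dirDeriv_smul_left, dirDeriv_smul_left, dirDeriv_neg_left,
        dirDeriv_neg_left, dirDeriv_comm hU hK c a h0]
      ring
    rw [e1, dirDeriv_add_left, dirDeriv_smul_left, dirDeriv_neg_left] at h
    have e2 : θ + (2 : ℝ) • (r • v) = θ + r • ((2 : ℝ) • v) := by module
    rw [e2] at h
    simp only [hW]
    linarith
  have hid := HasSecondDerivAt.id 0
  have hsec : HasSecondDerivAt W _ 0 :=
    (((hid.mul hid).mul (.const (dirDeriv a (dirDeriv a K) θ) 0)).add
      (hid.const_mul ((-2) * dirDeriv a (dirDeriv c K) θ)) |>.add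
      (.const (dirDeriv c (dirDeriv c K) θ) 0)).add
    (((hid.mul (hasSecondDerivAt_comp_line hU hac v h0)).const_mul 2).add
      ((hasSecondDerivAt_comp_line hU hcc v h0).const_mul (-2)) |>.add
      (hasSecondDerivAt_comp_line hU hcc ((2 : ℝ) • v) h0))
  have h := hsec.nonneg (by simp [hW]; ring) hn
  have hd : deriv (fun r : ℝ => dirDeriv a (dirDeriv c K) (θ + r • v)) 0 =
      dirDeriv v (dirDeriv a (dirDeriv c K)) θ := by
    simpa using (hasDerivAt_comp_line hU hac (x := θ) (v := v) (s := 0) (by simpa)).deriv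
  have hsmul : dirDeriv ((2 : ℝ) • v) (dirDeriv ((2 : ℝ) • v) (dirDeriv c (dirDeriv c K))) θ =
      4 * dirDeriv v (dirDeriv v (dirDeriv c (dirDeriv c K))) θ := by
    rw [dirDeriv_smul_left, dirDeriv_comm hU hcc _ _ h0, dirDeriv_smul_left]; ring
  rw [hd, hsmul] at h
  simp at h
  linarith

end PositiveKernel

section CubicForm

/-- A symmetric cubic form `T` that is trace-free and controlled by a symmetric quartic form `Q`
whose traces saturate the control must vanish. -/
lemma cubic_form_eq_zero {E : Type*} [AddCommGroup E] {n : ℕ} {e : Fin n → E}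
    {T : E → E → E → ℝ} {Q : E → E → E → E → ℝ}
    (hTadd : ∀ u v a b, T (u + v) a b = T u a b + T v a b)
    (hTneg : ∀ u a b, T (-u) a b = -T u a b)
    (hT₁ : ∀ a b c, T a b c = T b a c) (hT₂ : ∀ a b c, T a b c = T a c b)
    (hQadd : ∀ u v a b c, Q (u + v) a b c = Q u a b c + Q v a b c)
    (hQneg : ∀ u a b c, Q (-u) a b c = -Q u a b c)
    (hQ₁ : ∀ a b c d, Q a b c d = Q b a c d) (hQ₂ : ∀ a b c d, Q a b c d = Q a c b d)
    (hQ₃ : ∀ a b c d, Q a b c d = Q a b d c)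
    (hle : ∀ v c, ∑ i, T v (e i) c ^ 2 ≤ Q v v c c)
    (htr : ∀ v, ∑ j, T v (e j) (e j) = 0)
    (hsat : ∀ v, ∑ j, Q v v (e j) (e j) = ∑ j, ∑ i, T v (e i) (e j) ^ 2) (i j k : Fin n) :
    T (e i) (e j) (e k) = 0 := by
  have hT₃ : ∀ a b c, T a b c = T c b a := fun a b c => by rw [hT₁, hT₂, hT₁]
  have hTadd₃ : ∀ u v a b, T a b (u + v) = T a b u + T a b v := fun u v a b => by
    rw [hT₃, hTadd, hT₃ u, hT₃ v]
  have hTneg₃ : ∀ u a b, T a b (-u) = -T a b u := fun u a b => by rw [hT₃, hTneg, hT₃ u]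
  have hQ2add : ∀ u v a b c, Q a (u + v) b c = Q a u b c + Q a v b c := fun u v a b c => by
    rw [hQ₁, hQadd, hQ₁ u, hQ₁ v]
  have hQ2neg : ∀ u a b c, Q a (-u) b c = -Q a u b c := fun u a b c => by
    rw [hQ₁, hQneg, hQ₁ u]
  have hQ3add : ∀ u v a b c, Q a b (u + v) c = Q a b u c + Q a b v c := fun u v a b c => by
    rw [hQ₂, hQ2add, hQ₂ a u, hQ₂ a v]
  have hQ3neg : ∀ u a b c, Q a b (-u) c = -Q a b u c := fun u a b c => by
    rw [hQ₂, hQ2neg, hQ₂ a u]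
  have hQ4add : ∀ u v a b c, Q a b c (u + v) = Q a b c u + Q a b c v := fun u v a b c => by
    rw [hQ₃, hQ3add, hQ₃ a b u, hQ₃ a b v]
  have hQ4neg : ∀ u a b c, Q a b c (-u) = -Q a b c u := fun u a b c => by
    rw [hQ₃, hQ3neg, hQ₃ a b u]
  have hbasis : ∀ v j, Q v v (e j) (e j) = ∑ i, T v (e i) (e j) ^ 2 := by
    intro v j
    have h := (Finset.sum_eq_sum_iff_of_le fun j _ => hle v (e j)).mp (hsat v).symm
    exact (h j (Finset.mem_univ j)).symm
  have hsum : ∀ v i j,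
      Q v v (e i + e j) (e i + e j) = ∑ k, T v (e k) (e i + e j) ^ 2 ∧
      Q v v (e i + -e j) (e i + -e j) = ∑ k, T v (e k) (e i + -e j) ^ 2 := by
    intro v i j
    have h1 := hle v (e i + e j)
    have h2 := hle v (e i + -e j)
    have h3 : ∑ k, T v (e k) (e i + e j) ^ 2 + ∑ k, T v (e k) (e i + -e j) ^ 2
        = 2 * ∑ k, T v (e k) (e i) ^ 2 + 2 * ∑ k, T v (e k) (e j) ^ 2 := by
      rw [Finset.mul_sum, Finset.mul_sum, ← Finset.sum_add_distrib, ← Finset.sum_add_distrib]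
      refine Finset.sum_congr rfl fun k _ => ?_
      rw [hTadd₃, hTadd₃, hTneg₃]; ring
    have h4 : Q v v (e i + e j) (e i + e j) + Q v v (e i + -e j) (e i + -e j)
        = 2 * Q v v (e i) (e i) + 2 * Q v v (e j) (e j) := by
      simp only [hQ3add, hQ4add, hQ3neg, hQ4neg]; ring
    rw [hbasis, hbasis] at h4
    constructor <;> linarith
  have hpol : ∀ i j, ∑ k, T (e i) (e k) (e j) ^ 2 =
      ∑ k, T (e i) (e k) (e i) * T (e j) (e k) (e j) := by
    intro i j
    have h1 := (hsum (e i + e j) i j).1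
    have h2 := (hsum (e i + -e j) i j).2
    have h3 : Q (e i + e j) (e i + e j) (e i + e j) (e i + e j) +
        Q (e i + -e j) (e i + -e j) (e i + -e j) (e i + -e j) =
        2 * Q (e i) (e i) (e i) (e i) + 12 * Q (e i) (e i) (e j) (e j)
          + 2 * Q (e j) (e j) (e j) (e j) := by
      simp only [hQadd, hQneg, hQ2add, hQ2neg, hQ3add, hQ4add, hQ3neg, hQ4neg]
      have s1 : Q (e i) (e j) (e i) (e j) = Q (e i) (e i) (e j) (e j) := hQ₂ _ _ _ _
      have s2 : Q (e i) (e j) (e j) (e i) = Q (e i) (e i) (e j) (e j) := by rw [hQ₃, s1]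
      have s3 : Q (e j) (e i) (e i) (e j) = Q (e i) (e i) (e j) (e j) := by rw [hQ₁, s1]
      have s4 : Q (e j) (e i) (e j) (e i) = Q (e i) (e i) (e j) (e j) := by rw [hQ₁, s2]
      have s5 : Q (e j) (e j) (e i) (e i) = Q (e i) (e i) (e j) (e j) := by rw [hQ₂, s4]
      rw [s1, s2, s3, s4, s5]; ring
    have h4 : ∑ k, T (e i + e j) (e k) (e i + e j) ^ 2 +
        ∑ k, T (e i + -e j) (e k) (e i + -e j) ^ 2 =
        2 * ∑ k, T (e i) (e k) (e i) ^ 2 + 8 * ∑ k, T (e i) (e k) (e j) ^ 2 +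
        4 * ∑ k, T (e i) (e k) (e i) * T (e j) (e k) (e j) +
        2 * ∑ k, T (e j) (e k) (e j) ^ 2 := by
      simp only [Finset.mul_sum, ← Finset.sum_add_distrib]
      refine Finset.sum_congr rfl fun k _ => ?_
      rw [hTadd, hTadd, hTneg, hTadd₃, hTadd₃, hTadd₃, hTadd₃, hTneg₃, hTneg₃, hT₃ (e j) _ (e i)]
      ring
    rw [h1, h2, h4, hbasis, hbasis, hbasis] at h3
    linarith
  have hzero : ∑ j, ∑ k, T (e i) (e k) (e j) ^ 2 = 0 := by
    simp_rw [hpol]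
    rw [Finset.sum_comm]
    refine Finset.sum_eq_zero fun k _ => ?_
    rw [← Finset.mul_sum]
    have : ∑ j, T (e j) (e k) (e j) = 0 := by
      rw [← htr (e k)]
      exact Finset.sum_congr rfl fun j _ => hT₁ _ _ _
    rw [this, mul_zero]
  have h1 := (Finset.sum_eq_zero_iff_of_nonneg fun j _ =>
    Finset.sum_nonneg fun k _ => sq_nonneg _).mp hzero k (Finset.mem_univ k)
  have h2 := (Finset.sum_eq_zero_iff_of_nonneg fun k _ => sq_nonneg _).mp h1 j (Finset.mem_univ j)
  exact pow_eq_zero_iff two_ne_zero |>.mp h2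

end CubicForm

section LocalRigidity

/-- A function with a conditionally positive kernel whose Hessian is the identity at `θ` and has
constant determinant near `θ`, in the frame `e`, has vanishing third derivatives at `θ`. -/
lemma third_deriv_eq_zero {E : Type*} [NormedAddCommGroup E] [NormedSpace ℝ E] {U : Set E}
    {K : E → ℝ} {θ : E} (hU : IsOpen U) (hK : ContDiffOn ℝ (⊤ : ℕ∞) K U)
    (hpos : IsCondPosKernel U K θ) (h0 : θ ∈ U) {n : ℕ} {e : Fin n → E}
    (hone : Matrix.of (fun i j => dirDeriv (e i) (dirDeriv (e j) K) θ) = 1)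
    (hdet : ∀ x ∈ U, (Matrix.of fun i j => dirDeriv (e i) (dirDeriv (e j) K) x).det = 1)
    (i j k : Fin n) : dirDeriv (e i) (dirDeriv (e j) (dirDeriv (e k) K)) θ = 0 := by
  have hT₂ : ∀ a b c, dirDeriv a (dirDeriv b (dirDeriv c K)) θ =
      dirDeriv a (dirDeriv c (dirDeriv b K)) θ := fun a b c =>
    dirDeriv_congr hU (dirDeriv_comm hU hK b c) a h0
  have hT₁ : ∀ a b c, dirDeriv a (dirDeriv b (dirDeriv c K)) θ =
      dirDeriv b (dirDeriv a (dirDeriv c K)) θ := fun a b c =>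
    dirDeriv_comm hU (hK.dirDeriv hU c) a b h0
  have htrace : ∀ v,
      ∑ j, dirDeriv v (dirDeriv (e j) (dirDeriv (e j) K)) θ = 0 ∧
      ∑ j, dirDeriv v (dirDeriv v (dirDeriv (e j) (dirDeriv (e j) K))) θ =
        ∑ j, ∑ i, dirDeriv v (dirDeriv (e i) (dirDeriv (e j) K)) θ ^ 2 := by
    intro v
    have hmem : ∀ᶠ s : ℝ in 𝓝 0, θ + s • v ∈ U :=
      ContinuousAt.eventually_mem (by fun_prop) (hU.mem_nhds (by simpa))
    have hij := fun i j => (hK.dirDeriv hU (e j)).dirDeriv hU (e i)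
    have h := trace_derivs_of_det_eq_one
      (N := fun s => Matrix.of fun i j => dirDeriv (e i) (dirDeriv (e j) K) (θ + s • v))
      (N' := fun s => Matrix.of fun i j =>
        dirDeriv v (dirDeriv (e i) (dirDeriv (e j) K)) (θ + s • v))
      (N'' := Matrix.of fun i j => dirDeriv v (dirDeriv v (dirDeriv (e i) (dirDeriv (e j) K))) θ)
      (by
        filter_upwards [hmem] with s hs i j
        exact hasDerivAt_comp_line hU (hij i j) hs)
      (fun i j => by
        simpa using hasDerivAt_comp_line hU ((hij i j).dirDeriv hU v) (x := θ) (v := v) (s := 0)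
          (by simpa))
      (by simpa using hone)
      (by filter_upwards [hmem] with s hs using hdet _ hs)
    simp only [zero_smul, add_zero, Matrix.trace, Matrix.diag, Matrix.of_apply,
      Matrix.mul_apply] at h
    refine ⟨h.1, h.2.trans ?_⟩
    refine Finset.sum_congr rfl fun j _ => Finset.sum_congr rfl fun i _ => ?_
    rw [hT₂ v (e j) (e i), sq]
  refine cubic_form_eq_zero
    (T := fun a b c => dirDeriv a (dirDeriv b (dirDeriv c K)) θ)
    (Q := fun a b c d => dirDeriv a (dirDeriv b (dirDeriv c (dirDeriv d K))) θ)
    (fun _ _ _ _ => dirDeriv_add_left _ _ _ _) (fun _ _ _ => dirDeriv_neg_left _ _ _)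
    hT₁ hT₂
    (fun _ _ _ _ _ => dirDeriv_add_left _ _ _ _) (fun _ _ _ _ => dirDeriv_neg_left _ _ _)
    (fun a b c d => dirDeriv_comm hU ((hK.dirDeriv hU d).dirDeriv hU c) a b h0)
    (fun a b c d => dirDeriv_congr hU (dirDeriv_comm hU (hK.dirDeriv hU d) b c) a h0)
    (fun a b c d => dirDeriv_congr hU (dirDeriv_congr hU (dirDeriv_comm hU hK c d) b) a h0)
    ?_ (fun v => (htrace v).1) (fun v => (htrace v).2) i j k
  intro v c
  set t : Fin n → ℝ := fun i => dirDeriv v (dirDeriv (e i) (dirDeriv c K)) θ with ht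
  have h := hpos.fourth_deriv_nonneg hU hK h0 (∑ i, (-t i) • e i) v c
  have e1 : dirDeriv (∑ i, (-t i) • e i) (dirDeriv (∑ i, (-t i) • e i) K) θ = ∑ i, t i ^ 2 := by
    have : ∀ i, dirDeriv (e i) (dirDeriv (∑ j, (-t j) • e j) K) θ = -t i := by
      intro i
      rw [dirDeriv_comm hU hK _ _ h0, dirDeriv_sum_left]
      simp_rw [dirDeriv_smul_left]
      have h1 : ∀ j, dirDeriv (e j) (dirDeriv (e i) K) θ =
          (1 : Matrix (Fin n) (Fin n) ℝ) j i := fun j => by rw [← hone]; rfl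
      simp [h1, Matrix.one_apply]
    rw [dirDeriv_sum_left]
    simp_rw [dirDeriv_smul_left, this]
    exact Finset.sum_congr rfl fun i _ => by ring
  have e2 : dirDeriv v (dirDeriv (∑ i, (-t i) • e i) (dirDeriv c K)) θ = -∑ i, t i ^ 2 := by
    rw [hT₁, dirDeriv_sum_left, ← Finset.sum_neg_distrib]
    refine Finset.sum_congr rfl fun i _ => ?_
    rw [dirDeriv_smul_left, hT₁ (e i) v c]; simp only [ht]; ring
  rw [e1, e2] at h
  linarith

end LocalRigidity

section Bregman

lemma exists_mul_sq_le_inner {E : Type*} [NormedAddCommGroup E] [InnerProductSpace ℝ E]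
    [FiniteDimensional ℝ E] {A : E →L[ℝ] E}
    (hA : ∀ u, u ≠ 0 → 0 < ⟪A u, u⟫) : ∃ c > 0, ∀ u, c * ‖u‖ ^ 2 ≤ ⟪A u, u⟫ := by
  rcases (Metric.sphere (0 : E) 1).eq_empty_or_nonempty with hempty | hne
  · refine ⟨1, one_pos, fun u => ?_⟩
    by_cases hu : u = 0
    · simp [hu]
    · have : (‖u‖⁻¹ • u) ∈ Metric.sphere (0 : E) 1 := by
        simp [norm_smul, hu]
      simp [hempty] at this
  · obtain ⟨z, hz, hmin⟩ := (isCompact_sphere (0 : E) 1).exists_isMinOn hne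
      (f := fun u => ⟪A u, u⟫) (by fun_prop)
    have hz0 : z ≠ 0 := by rintro rfl; simp at hz
    refine ⟨⟪A z, z⟫, hA z hz0, fun u => ?_⟩
    by_cases hu : u = 0
    · simp [hu]
    · have hu' : ‖u‖ ≠ 0 := by simpa using hu
      have hmem : (‖u‖⁻¹ • u) ∈ Metric.sphere (0 : E) 1 := by
        simp [norm_smul, hu]
      have h := hmin hmem
      simp only [Set.mem_ofPred_eq, map_smul, inner_smul_left, inner_smul_right,
        conj_trivial] at h
      calc ⟪A z, z⟫ * ‖u‖ ^ 2 ≤ (‖u‖⁻¹ * (‖u‖⁻¹ * ⟪A u, u⟫)) * ‖u‖ ^ 2 := by gcongr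
        _ = ⟪A u, u⟫ := by field_simp

variable {E : Type*} [NormedAddCommGroup E] [InnerProductSpace ℝ E] [CompleteSpace E] {f : E → ℝ}

/-- The Bregman divergence of `f`: the height of the graph of `f` at `y` above its tangent
hyperplane at `x`. -/
noncomputable def bregman (f : E → ℝ) (x y : E) : ℝ := f y - f x - ⟪gradient f x, y - x⟫

lemma inner_gradient_eq_fderiv (f : E → ℝ) (x u : E) : ⟪gradient f x, u⟫ = fderiv ℝ f x u := by
  rw [← toDual_gradient, InnerProductSpace.toDual_apply_apply]

lemma contDiff_gradient (hf : ContDiff ℝ (⊤ : ℕ∞) f) : ContDiff ℝ (⊤ : ℕ∞) (gradient f) := by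
  have h : gradient f = fun x => (InnerProductSpace.toDual ℝ E).symm (fderiv ℝ f x) := rfl
  rw [h]
  exact (InnerProductSpace.toDual ℝ E).symm.contDiff.comp (hf.fderiv_right (by simp))

lemma continuous_bregman (hf : ContDiff ℝ (⊤ : ℕ∞) f) (x : E) : Continuous (bregman f x) := by
  have := hf.continuous
  unfold bregman
  fun_prop

lemma hasDerivAt_line (hf : ContDiff ℝ (⊤ : ℕ∞) f) (x u : E) (s : ℝ) :
    HasDerivAt (fun r : ℝ => f (x + r • u)) ⟪gradient f (x + s • u), u⟫ s := by
  rw [inner_gradient_eq_fderiv]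
  have h1 : HasFDerivAt f (fderiv ℝ f (x + s • u)) (x + s • u) :=
    (hf.differentiable (by simp) _).hasFDerivAt
  have h2 : HasDerivAt (fun r : ℝ => x + r • u) u s := by
    simpa using ((hasDerivAt_id s).smul_const u).const_add x
  exact h1.comp_hasDerivAt s h2

lemma bregman_nonneg (hf : ContDiff ℝ (⊤ : ℕ∞) f) (hconv : ConvexOn ℝ Set.univ f) (x y : E) :
    0 ≤ bregman f x y := by
  have h1 : ConvexOn ℝ Set.univ (fun r : ℝ => f (x + r • (y - x))) := by
    have := hconv.comp_affineMap (AffineMap.lineMap x y)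
    refine this.congr fun r _ => ?_
    simp [AffineMap.lineMap_apply, add_comm]
  have h2 := h1.le_slope_of_hasDerivAt (Set.mem_univ 0) (Set.mem_univ 1) one_pos
    (hasDerivAt_line hf x (y - x) 0)
  simp [slope_def_field] at h2
  rw [bregman, inner_gradient_eq_fderiv, map_sub]
  linarith

lemma bregman_smul_le (hconv : ConvexOn ℝ Set.univ f) (x w : E) {s : ℝ} (h0 : 0 ≤ s)
    (h1 : s ≤ 1) : bregman f x (x + s • w) ≤ s * bregman f x (x + w) := by
  have h := hconv.2 (Set.mem_univ x) (Set.mem_univ (x + w)) (sub_nonneg.mpr h1) h0 (by ring)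
  have e : (1 - s) • x + s • (x + w) = x + s • w := by module
  rw [e, smul_eq_mul, smul_eq_mul] at h
  simp only [bregman, add_sub_cancel_left, inner_smul_right]
  linarith

lemma bregman_eq_add (f : E → ℝ) (x m y : E) :
    bregman f x y = bregman f m y + bregman f x m + ⟪gradient f m - gradient f x, y - m⟫ := by
  simp only [bregman, inner_sub_left, inner_sub_right]
  ring

lemma exists_bregman_growth [FiniteDimensional ℝ E] (hf : ContDiff ℝ (⊤ : ℕ∞) f)
    (hconv : ConvexOn ℝ Set.univ f) (x : E)
    (hA : ∀ u, u ≠ 0 → 0 < ⟪fderiv ℝ (gradient f) x u, u⟫) :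
    ∃ c > 0, ∃ r > 0, ∀ w, c * min (‖w‖ ^ 2) (r * ‖w‖) ≤ bregman f x (x + w) := by
  obtain ⟨c, hc, hcA⟩ := exists_mul_sq_le_inner hA
  have hd : HasFDerivAt (gradient f) (fderiv ℝ (gradient f) x) x :=
    ((contDiff_gradient hf).differentiable (by simp) x).hasFDerivAt
  have ho := (hasFDerivAt_iff_isLittleO_nhds_zero.mp hd).def (half_pos hc)
  obtain ⟨r, hr, hball⟩ := Metric.eventually_nhds_iff_ball.mp ho
  have hquad : ∀ w : E, ‖w‖ ≤ r → c / 8 * ‖w‖ ^ 2 ≤ bregman f x (x + w) := by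
    intro w hw
    rcases eq_or_ne w 0 with rfl | hw0
    · simp [bregman]
    set v : E := (2⁻¹ : ℝ) • w with hv
    have hvn : ‖v‖ = ‖w‖ / 2 := by rw [hv, norm_smul]; simp; ring
    have hvr : v ∈ Metric.ball (0 : E) r := by
      have : 0 < ‖w‖ := norm_pos_iff.mpr hw0
      rw [mem_ball_zero_iff, hvn]; linarith
    have h1 := hball v hvr
    have h2 : ⟪gradient f (x + v) - gradient f x, v⟫ ≥ c / 2 * ‖v‖ ^ 2 := by
      have h3 := abs_real_inner_le_norm
        (gradient f (x + v) - gradient f x - fderiv ℝ (gradient f) x v) v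
      have h4 := neg_abs_le
        ⟪gradient f (x + v) - gradient f x - fderiv ℝ (gradient f) x v, v⟫
      rw [inner_sub_left] at h4 h3
      have h5 := hcA v
      have h6 := mul_le_mul_of_nonneg_right h1 (norm_nonneg v)
      nlinarith
    have h3 := bregman_eq_add f x (x + v) (x + w)
    have h4 : x + w - (x + v) = v := by rw [hv]; module
    rw [h4] at h3
    have h5 := bregman_nonneg hf hconv (x + v) (x + w)
    have h6 := bregman_nonneg hf hconv x (x + v)
    rw [hvn] at h2
    nlinarith
  refine ⟨c / 8, by positivity, r, hr, fun w => ?_⟩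
  rcases le_total ‖w‖ r with hw | hw
  · exact (mul_le_mul_of_nonneg_left (min_le_left _ _) (by positivity)).trans (hquad w hw)
  · have hw0 : 0 < ‖w‖ := hr.trans_le hw
    have h1 := bregman_smul_le hconv x w (s := r / ‖w‖) (by positivity) ((div_le_one hw0).mpr hw)
    have h2 : ‖(r / ‖w‖) • w‖ = r := by
      rw [norm_smul, Real.norm_of_nonneg (by positivity)]; field_simp
    have h3 := (hquad _ h2.le).trans h1
    rw [h2, div_mul_eq_mul_div r, le_div_iff₀ hw0] at h3
    refine (mul_le_mul_of_nonneg_left (min_le_right _ _) (by positivity)).trans ?_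
    have h4 : r * (c / 8 * (r * ‖w‖)) ≤ r * bregman f x (x + w) := by linarith
    exact le_of_mul_le_mul_left h4 hr

lemma tendsto_bregman_div_sq (hf : ContDiff ℝ (⊤ : ℕ∞) f) (x u : E) :
    Tendsto (fun s : ℝ => bregman f x (x + s • u) / s ^ 2) (𝓝[≠] 0)
      (𝓝 (⟪fderiv ℝ (gradient f) x u, u⟫ / 2)) := by
  have hd : ∀ s : ℝ, HasDerivAt (fun s : ℝ => bregman f x (x + s • u))
      (⟪gradient f (x + s • u), u⟫ - ⟪gradient f x, u⟫) s := by
    intro s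
    simp only [bregman, add_sub_cancel_left, inner_smul_right]
    have h := ((hasDerivAt_line hf x u s).sub_const (f x)).fun_sub
      ((hasDerivAt_id' s).mul_const ⟪gradient f x, u⟫)
    rwa [one_mul] at h
  have hg : HasDerivAt (fun s : ℝ => ⟪gradient f (x + s • u), u⟫)
      ⟪fderiv ℝ (gradient f) x u, u⟫ 0 := by
    have h1 : HasFDerivAt (gradient f) (fderiv ℝ (gradient f) (x + (0 : ℝ) • u))
        (x + (0 : ℝ) • u) :=
      ((contDiff_gradient hf).differentiable (by simp) _).hasFDerivAt
    have h2 : HasDerivAt (fun r : ℝ => x + r • u) u 0 := by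
      simpa using ((hasDerivAt_id (0 : ℝ)).smul_const u).const_add x
    have h3 := (h1.comp_hasDerivAt (0 : ℝ) h2).inner ℝ (hasDerivAt_const (0 : ℝ) u)
    simpa using h3
  refine HasDerivAt.lhopital_zero_nhdsNE (f' := fun s => ⟪gradient f (x + s • u), u⟫ -
    ⟪gradient f x, u⟫) (g' := fun s => 2 * s) (.of_forall hd)
    (.of_forall fun s => by simpa using hasDerivAt_pow 2 s)
    (by filter_upwards [self_mem_nhdsWithin] with s hs using mul_ne_zero two_ne_zero hs) ?_ ?_ ?_
  · have : ContinuousAt (fun s : ℝ => bregman f x (x + s • u)) 0 := (hd 0).continuousAt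
    refine Tendsto.mono_left ?_ nhdsWithin_le_nhds
    simpa [ContinuousAt, bregman] using this
  · have : ContinuousAt (fun s : ℝ => s ^ 2) 0 := by fun_prop
    refine Tendsto.mono_left ?_ nhdsWithin_le_nhds
    simpa [ContinuousAt] using this
  · have h1 := (hasDerivAt_iff_tendsto_slope_zero.mp hg).div_const 2
    refine h1.congr fun s => ?_
    simp only [zero_add, zero_smul, add_zero, smul_eq_mul]
    rw [inv_mul_eq_div, div_div, mul_comm s 2]

end Bregman

section LayerCake

lemma lintegral_exp_mul_ofReal_sub (t s : ℝ) :
    ∫⁻ k, ENNReal.ofReal (Real.exp (-(t * k))) * ENNReal.ofReal (k - s) =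
      ENNReal.ofReal (Real.exp (-(t * s))) *
        ∫⁻ k, ENNReal.ofReal (Real.exp (-(t * k))) * ENNReal.ofReal k := by
  rw [← lintegral_const_mul _ (by fun_prop), ← lintegral_add_right_eq_self _ s]
  refine lintegral_congr fun k => ?_
  rw [← mul_assoc, ← ENNReal.ofReal_mul (Real.exp_pos (-(t * s))).le, ← Real.exp_add,
    add_sub_cancel_right]
  congr 3
  ring

lemma lintegral_exp_mul_ofReal_ne_zero (t : ℝ) :
    ∫⁻ k, ENNReal.ofReal (Real.exp (-(t * k))) * ENNReal.ofReal k ≠ 0 := by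
  rw [← pos_iff_ne_zero, lintegral_pos_iff_support (by fun_prop)]
  refine lt_of_lt_of_le ?_ (measure_mono (s := Set.Ioi (0 : ℝ)) fun k hk => ?_)
  · simp
  · have hk' : 0 < k := hk
    simp [hk', Real.exp_pos]

lemma lintegral_exp_mul_ofReal_ne_top {t : ℝ} (ht : 0 < t) :
    ∫⁻ k, ENNReal.ofReal (Real.exp (-(t * k))) * ENNReal.ofReal k ≠ ⊤ := by
  have h1 : IntegrableOn (fun k => Real.exp (-(t / 2) * k)) (Set.Ioi 0) :=
    exp_neg_integrableOn_Ioi 0 (half_pos ht)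
  have h2 := ((integrable_indicator_iff measurableSet_Ioi).mpr
    (h1.const_mul (2 / t))).lintegral_lt_top
  refine (lt_of_le_of_lt (lintegral_mono fun k => ?_) h2).ne
  rw [← ENNReal.ofReal_mul (Real.exp_pos _).le]
  rcases le_or_gt k 0 with hk | hk
  · rw [ENNReal.ofReal_of_nonpos (mul_nonpos_of_nonneg_of_nonpos (Real.exp_pos _).le hk)]
    exact zero_le
  · refine ENNReal.ofReal_le_ofReal ?_
    rw [Set.indicator_of_mem (Set.mem_Ioi.mpr hk)]
    have h3 := Real.add_one_le_exp (t / 2 * k)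
    have h4 : Real.exp (-(t * k)) = Real.exp (-(t / 2) * k) * Real.exp (-(t / 2) * k) := by
      rw [← Real.exp_add]; ring_nf
    have h5 : Real.exp (-(t / 2) * k) * k ≤ 2 / t := by
      rw [neg_mul, Real.exp_neg, inv_mul_le_iff₀ (Real.exp_pos _), mul_div_assoc', le_div_iff₀ ht]
      linarith
    rw [h4, mul_assoc, mul_comm]
    exact mul_le_mul_of_nonneg_right h5 (Real.exp_pos _).le

variable {E : Type*} [MeasurableSpace E] {μ : Measure E} [SFinite μ]

lemma lintegral_exp_neg_mul_eq_layercake {D : E → ℝ} (hD : Measurable D) (t : ℝ) :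
    (∫⁻ y, ENNReal.ofReal (Real.exp (-(t * D y))) ∂μ) *
        ∫⁻ k, ENNReal.ofReal (Real.exp (-(t * k))) * ENNReal.ofReal k =
      ∫⁻ k, ENNReal.ofReal (Real.exp (-(t * k))) * ∫⁻ y, ENNReal.ofReal (k - D y) ∂μ := by
  rw [← lintegral_mul_const _ (by fun_prop)]
  simp_rw [← lintegral_exp_mul_ofReal_sub]
  rw [lintegral_lintegral_swap (by fun_prop)]
  refine lintegral_congr fun k => ?_
  rw [lintegral_const_mul _ (by fun_prop)]

/-- The Laplace transform of the distribution of `D` is determined by the volumes of the regions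
`{(y, z) | D y < z < k}`. -/
lemma integral_exp_neg_mul_congr {D D' : E → ℝ} (hD : Measurable D) (hD' : Measurable D')
    (h : ∀ k, ∫⁻ y, ENNReal.ofReal (k - D y) ∂μ = ∫⁻ y, ENNReal.ofReal (k - D' y) ∂μ)
    {t : ℝ} (ht : 0 < t) :
    ∫ y, Real.exp (-(t * D y)) ∂μ = ∫ y, Real.exp (-(t * D' y)) ∂μ := by
  have h1 : ∫⁻ y, ENNReal.ofReal (Real.exp (-(t * D y))) ∂μ =
      ∫⁻ y, ENNReal.ofReal (Real.exp (-(t * D' y))) ∂μ := by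
    rw [← ENNReal.mul_left_inj (lintegral_exp_mul_ofReal_ne_zero t)
      (lintegral_exp_mul_ofReal_ne_top ht), lintegral_exp_neg_mul_eq_layercake hD,
      lintegral_exp_neg_mul_eq_layercake hD']
    simp_rw [h]
  rw [integral_eq_lintegral_of_nonneg_ae (.of_forall fun _ => (Real.exp_pos _).le)
    (by fun_prop), integral_eq_lintegral_of_nonneg_ae (.of_forall fun _ => (Real.exp_pos _).le)
    (by fun_prop), h1]

end LayerCake

lemma integrable_exp_neg_mul_norm {E : Type*} [NormedAddCommGroup E] [NormedSpace ℝ E]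
    [FiniteDimensional ℝ E] [MeasurableSpace E] [BorelSpace E] (μ : Measure E)
    [μ.IsAddHaarMeasure] {a : ℝ} (ha : 0 < a) :
    Integrable (fun u : E => Real.exp (-(a * ‖u‖))) μ := by
  set N := Module.finrank ℝ E + 1 with hN
  have h1 : Integrable (fun u : E => (1 + ‖u‖) ^ (-(N : ℝ))) μ :=
    integrable_one_add_norm (by rw [hN]; push_cast; linarith)
  refine (h1.const_mul (Real.exp a * N.factorial / a ^ N)).mono' (by fun_prop)
    (.of_forall fun u => ?_)
  rw [Real.norm_of_nonneg (Real.exp_pos _).le]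
  have h0 : 0 < 1 + ‖u‖ := by positivity
  have h2 := Real.pow_div_factorial_le_exp (a * (1 + ‖u‖)) (by positivity) N
  rw [Real.rpow_neg h0.le, Real.rpow_natCast, Real.exp_neg, inv_le_iff_one_le_mul₀ (Real.exp_pos _)]
  rw [show a * (1 + ‖u‖) = a + a * ‖u‖ by ring, Real.exp_add] at h2
  have h3 : Real.exp a * N.factorial / a ^ N * ((1 + ‖u‖) ^ N)⁻¹ * Real.exp (a * ‖u‖) =
      Real.exp a * Real.exp (a * ‖u‖) / ((a + a * ‖u‖) ^ N / N.factorial) := by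
    rw [show a + a * ‖u‖ = a * (1 + ‖u‖) by ring, mul_pow]
    field_simp
  rwa [h3, one_le_div (by positivity)]

section BregmanIntegrals

variable {E : Type*} [NormedAddCommGroup E] [InnerProductSpace ℝ E] [FiniteDimensional ℝ E]
  [MeasurableSpace E] [BorelSpace E] {μ : Measure E} [μ.IsAddHaarMeasure] {f : E → ℝ}

lemma mul_sub_le_mul_min {c : ℝ} (hc : 0 < c) (r a : ℝ) :
    c * r * a - c * r ^ 2 ≤ c * min (a ^ 2) (r * a) := by
  have : r * a - r ^ 2 ≤ min (a ^ 2) (r * a) :=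
    le_min (by nlinarith [sq_nonneg (2 * a - r), sq_nonneg r]) (by nlinarith [sq_nonneg r])
  nlinarith

lemma integrable_exp_neg_bregman (hf : ContDiff ℝ (⊤ : ℕ∞) f) (hconv : ConvexOn ℝ Set.univ f)
    (hA : ∀ x u, u ≠ 0 → 0 < ⟪fderiv ℝ (gradient f) x u, u⟫) (x : E) {t : ℝ} (ht : 0 < t) :
    Integrable (fun y => Real.exp (-(t * bregman f x y))) μ := by
  obtain ⟨c, hc, r, hr, hgrow⟩ := exists_bregman_growth hf hconv x (hA x)
  have hcont := continuous_bregman hf x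
  have h : Integrable (fun w => Real.exp (-(t * bregman f x (x + w)))) μ := by
    refine ((integrable_exp_neg_mul_norm μ (a := t * (c * r)) (by positivity)).const_mul
      (Real.exp (t * (c * r ^ 2)))).mono' (by fun_prop) (.of_forall fun w => ?_)
    rw [Real.norm_of_nonneg (Real.exp_pos _).le, ← Real.exp_add, Real.exp_le_exp]
    have h1 := (mul_sub_le_mul_min hc r ‖w‖).trans (hgrow w)
    nlinarith [mul_le_mul_of_nonneg_left h1 ht.le]
  simpa using h.comp_add_left (-x)

lemma lintegral_ofReal_sub_bregman (hf : ContDiff ℝ (⊤ : ℕ∞) f) (hconv : ConvexOn ℝ Set.univ f)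
    (hA : ∀ x u, u ≠ 0 → 0 < ⟪fderiv ℝ (gradient f) x u, u⟫) (x : E) (k : ℝ) :
    ∫⁻ y, ENNReal.ofReal (k - bregman f x y) ∂μ =
      ENNReal.ofReal (∫ y in {y | f y < f x + ⟪gradient f x, y - x⟫ + k},
        (f x + ⟪gradient f x, y - x⟫ + k - f y) ∂μ) := by
  have hcont := continuous_bregman hf x
  have hset : {y | f y < f x + ⟪gradient f x, y - x⟫ + k} = {y | bregman f x y < k} := by
    ext y
    simp only [bregman, Set.mem_ofPred_eq]
    constructor <;> intro h <;> linarith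
  have hfun : ∀ y, f x + ⟪gradient f x, y - x⟫ + k - f y = k - bregman f x y := by
    intro y
    simp only [bregman]
    ring
  simp_rw [hset, hfun]
  have hopen : MeasurableSet {y | bregman f x y < k} :=
    (isOpen_lt hcont continuous_const).measurableSet
  obtain ⟨c, hc, r, hr, hgrow⟩ := exists_bregman_growth hf hconv x (hA x)
  have hbdd : {y | bregman f x y < k} ⊆ Metric.closedBall x ((k + c * r ^ 2) / (c * r)) := by
    intro y hy
    rw [Set.mem_ofPred_eq] at hy
    rw [mem_closedBall_iff_norm, le_div_iff₀ (by positivity)]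
    have h1 := (mul_sub_le_mul_min hc r ‖y - x‖).trans (hgrow (y - x))
    rw [add_sub_cancel] at h1
    linarith
  have hint : IntegrableOn (fun y => k - bregman f x y) {y | bregman f x y < k} μ :=
    ((continuous_const.sub hcont).continuousOn.integrableOn_compact
      (isCompact_closedBall _ _)).mono_set hbdd
  rw [ofReal_integral_eq_lintegral_ofReal hint, ← lintegral_indicator hopen]
  · refine lintegral_congr fun y => ?_
    by_cases hy : bregman f x y < k
    · rw [Set.indicator_of_mem (by exact hy)]
    · rw [Set.indicator_of_notMem (by exact hy), ENNReal.ofReal_of_nonpos (by linarith)]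
  · filter_upwards [ae_restrict_mem hopen] with y hy
    exact sub_nonneg.mpr (le_of_lt hy)

lemma integral_exp_neg_bregman_congr (hf : ContDiff ℝ (⊤ : ℕ∞) f) (hconv : ConvexOn ℝ Set.univ f)
    (hA : ∀ x u, u ≠ 0 → 0 < ⟪fderiv ℝ (gradient f) x u, u⟫) {φ : ℝ → ℝ}
    (hV : ∀ x k, 0 < k → ∫ y in {y | f y < f x + ⟪gradient f x, y - x⟫ + k},
      (f x + ⟪gradient f x, y - x⟫ + k - f y) ∂μ = φ k) (x x' : E) {t : ℝ} (ht : 0 < t) :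
    ∫ y, Real.exp (-(t * bregman f x y)) ∂μ = ∫ y, Real.exp (-(t * bregman f x' y)) ∂μ := by
  refine integral_exp_neg_mul_congr (continuous_bregman hf x).measurable
    (continuous_bregman hf x').measurable (fun k => ?_) ht
  rcases le_or_gt k 0 with hk | hk
  · refine lintegral_congr fun y => ?_
    rw [ENNReal.ofReal_of_nonpos, ENNReal.ofReal_of_nonpos] <;>
    linarith [bregman_nonneg hf hconv x y, bregman_nonneg hf hconv x' y]
  · rw [lintegral_ofReal_sub_bregman hf hconv hA, lintegral_ofReal_sub_bregman hf hconv hA,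
      hV x k hk, hV x' k hk]

lemma integral_comp_add_smul (F : E → ℝ) (x : E) (s : ℝ) :
    ∫ u, F (x + s • u) ∂μ = |(s ^ Module.finrank ℝ E)⁻¹| * ∫ y, F y ∂μ := by
  rw [Measure.integral_comp_smul μ (fun u => F (x + u)), integral_add_left_eq_self, smul_eq_mul]

lemma tendsto_integral_exp_neg_bregman (hf : ContDiff ℝ (⊤ : ℕ∞) f)
    (hconv : ConvexOn ℝ Set.univ f)
    (hA : ∀ x u, u ≠ 0 → 0 < ⟪fderiv ℝ (gradient f) x u, u⟫) (x : E) :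
    Tendsto (fun s : ℝ => ∫ u, Real.exp (-((s ^ 2)⁻¹ * bregman f x (x + s • u))) ∂μ) (𝓝[>] 0)
      (𝓝 (∫ u, Real.exp (-(⟪fderiv ℝ (gradient f) x u, u⟫ / 2)) ∂μ)) := by
  obtain ⟨c, hc, r, hr, hgrow⟩ := exists_bregman_growth hf hconv x (hA x)
  have hcont := continuous_bregman hf x
  refine tendsto_integral_filter_of_dominated_convergence
    (fun u => Real.exp (c * r ^ 2) * Real.exp (-(c * r * ‖u‖)))
    (.of_forall fun s => by fun_prop) ?_
    ((integrable_exp_neg_mul_norm μ (by positivity)).const_mul _) (.of_forall fun u => ?_)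
  · filter_upwards [Ioc_mem_nhdsGT (zero_lt_one' ℝ)] with s hs
    refine .of_forall fun u => ?_
    rw [Real.norm_of_nonneg (Real.exp_pos _).le, ← Real.exp_add, Real.exp_le_exp]
    have h0 : 0 < s := hs.1
    have h1 := mul_sub_le_mul_min hc r ‖u‖
    have h2 : s ^ 2 * min (‖u‖ ^ 2) (r * ‖u‖) ≤ min (‖s • u‖ ^ 2) (r * ‖s • u‖) := by
      rw [norm_smul, Real.norm_of_nonneg h0.le]
      refine le_min ?_ ?_
      · rw [mul_pow]
        exact mul_le_mul_of_nonneg_left (min_le_left _ _) (by positivity)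
      · refine (mul_le_mul_of_nonneg_left (min_le_right _ _) (by positivity)).trans ?_
        have h3 : s ^ 2 ≤ s := by nlinarith [hs.2]
        nlinarith [mul_le_mul_of_nonneg_right h3 (by positivity : 0 ≤ r * ‖u‖)]
    have h3 : c * min (‖u‖ ^ 2) (r * ‖u‖) ≤ (s ^ 2)⁻¹ * bregman f x (x + s • u) := by
      rw [le_inv_mul_iff₀ (by positivity)]
      refine le_trans ?_ (hgrow (s • u))
      nlinarith
    linarith
  · have h1 := (tendsto_bregman_div_sq hf x u).mono_left
      (nhdsWithin_mono 0 (fun s (hs : 0 < s) => hs.ne'))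
    refine (Real.continuous_exp.tendsto _).comp (h1.neg.congr fun s => ?_)
    rw [inv_mul_eq_div]

lemma integral_exp_neg_inner_fderiv_gradient_congr (hf : ContDiff ℝ (⊤ : ℕ∞) f)
    (hconv : ConvexOn ℝ Set.univ f)
    (hA : ∀ x u, u ≠ 0 → 0 < ⟪fderiv ℝ (gradient f) x u, u⟫)
    (hψ : ∀ x x' t, 0 < t → ∫ y, Real.exp (-(t * bregman f x y)) ∂μ =
      ∫ y, Real.exp (-(t * bregman f x' y)) ∂μ) (x x' : E) :
    ∫ u, Real.exp (-(⟪fderiv ℝ (gradient f) x u, u⟫ / 2)) ∂μ =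
      ∫ u, Real.exp (-(⟪fderiv ℝ (gradient f) x' u, u⟫ / 2)) ∂μ := by
  refine tendsto_nhds_unique_of_eventuallyEq (tendsto_integral_exp_neg_bregman hf hconv hA x)
    (tendsto_integral_exp_neg_bregman hf hconv hA x') ?_
  filter_upwards [self_mem_nhdsWithin] with s hs
  have hs' : 0 < s := hs
  rw [integral_comp_add_smul (fun y => Real.exp (-((s ^ 2)⁻¹ * bregman f x y))),
    integral_comp_add_smul (fun y => Real.exp (-((s ^ 2)⁻¹ * bregman f x' y))),
    hψ x x' _ (by positivity)]

end BregmanIntegrals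

section Matrices

open Matrix

variable {n : ℕ}

/-- The matrix of the bilinear form `(u, v) ↦ ⟪T u, v⟫` on `ℝⁿ`. -/
noncomputable def formMatrix (T : EuclideanSpace ℝ (Fin n) →L[ℝ] EuclideanSpace ℝ (Fin n)) :
    Matrix (Fin n) (Fin n) ℝ :=
  Matrix.of fun i j => ⟪T (EuclideanSpace.single i 1), EuclideanSpace.single j 1⟫

lemma sum_smul_single (u : EuclideanSpace ℝ (Fin n)) :
    ∑ i, u i • EuclideanSpace.single i (1 : ℝ) = u := by
  simpa using (EuclideanSpace.basisFun (Fin n) ℝ).sum_repr u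

lemma inner_eq_sum_formMatrix (T : EuclideanSpace ℝ (Fin n) →L[ℝ] EuclideanSpace ℝ (Fin n))
    (u v : EuclideanSpace ℝ (Fin n)) :
    ⟪T u, v⟫ = ∑ i, ∑ j, formMatrix T i j * u i * v j := by
  conv_lhs => rw [← sum_smul_single u, ← sum_smul_single v]
  simp only [map_sum, map_smul, sum_inner, inner_sum, inner_smul_left, inner_smul_right,
    conj_trivial, formMatrix, Matrix.of_apply]
  rw [Finset.sum_comm]
  refine Finset.sum_congr rfl fun i _ => ?_
  rw [Finset.mul_sum]
  refine Finset.sum_congr rfl fun j _ => ?_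
  ring

lemma inner_eq_dotProduct_formMatrix
    (T : EuclideanSpace ℝ (Fin n) →L[ℝ] EuclideanSpace ℝ (Fin n))
    (u v : EuclideanSpace ℝ (Fin n)) :
    ⟪T u, v⟫ = u.ofLp ⬝ᵥ formMatrix T *ᵥ v.ofLp := by
  rw [inner_eq_sum_formMatrix]
  simp only [dotProduct, mulVec, Finset.mul_sum]
  refine Finset.sum_congr rfl fun i _ => Finset.sum_congr rfl fun j _ => ?_
  ring

lemma formMatrix_id : formMatrix (ContinuousLinearMap.id ℝ (EuclideanSpace ℝ (Fin n))) = 1 := by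
  ext i j
  simp [formMatrix, Matrix.one_apply, EuclideanSpace.inner_single_left]

lemma formMatrix_comp (S T : EuclideanSpace ℝ (Fin n) →L[ℝ] EuclideanSpace ℝ (Fin n)) :
    formMatrix (S.comp T) = formMatrix T * formMatrix S := by
  ext i j
  rw [formMatrix, Matrix.of_apply, ContinuousLinearMap.comp_apply,
    inner_eq_sum_formMatrix]
  simp [Matrix.mul_apply, formMatrix, EuclideanSpace.inner_single_right, mul_comm]

lemma inner_fderiv_gradient (f : EuclideanSpace ℝ (Fin n) → ℝ)
    (x u v : EuclideanSpace ℝ (Fin n)) :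
    ⟪fderiv ℝ (gradient f) x u, v⟫ = fderiv ℝ (fderiv ℝ f) x u v := by
  have h : gradient f = (InnerProductSpace.toDual ℝ (EuclideanSpace ℝ (Fin n))).symm ∘
    fderiv ℝ f := rfl
  rw [h, LinearIsometryEquiv.comp_fderiv]
  exact InnerProductSpace.toDual_symm_apply

lemma hessianMatrix_eq_formMatrix (f : EuclideanSpace ℝ (Fin n) → ℝ)
    (x : EuclideanSpace ℝ (Fin n)) :
    hessianMatrix f x = formMatrix (fderiv ℝ (gradient f) x) := by
  ext i j
  simp [hessianMatrix, formMatrix, inner_fderiv_gradient, iteratedFDeriv_two_apply]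

lemma inner_pos_of_posDef {T : EuclideanSpace ℝ (Fin n) →L[ℝ] EuclideanSpace ℝ (Fin n)}
    (hT : (formMatrix T).PosDef) {u : EuclideanSpace ℝ (Fin n)} (hu : u ≠ 0) :
    0 < ⟪T u, u⟫ := by
  rw [inner_eq_dotProduct_formMatrix]
  exact hT.dotProduct_mulVec_pos (x := u.ofLp) (by simpa using hu)

open scoped MatrixOrder in
lemma exists_eq_transpose_mul_self {M : Matrix (Fin n) (Fin n) ℝ} (hM : M.PosDef) :
    ∃ L : Matrix (Fin n) (Fin n) ℝ, M = Lᵀ * L := by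
  obtain ⟨L, hL⟩ := CStarAlgebra.nonneg_iff_eq_star_mul_self.mp hM.posSemidef.nonneg
  exact ⟨L, hL⟩

lemma integral_comp_toEuclideanLin {F : EuclideanSpace ℝ (Fin n) → ℝ} (hF : Continuous F)
    {L : Matrix (Fin n) (Fin n) ℝ} (hL : L.det ≠ 0) :
    ∫ u, F (toEuclideanLin L u) = |L.det|⁻¹ * ∫ u, F u := by
  have hdet : LinearMap.det (toEuclideanLin L) = L.det := by
    rw [toEuclideanLin, toLpLin_eq_toLin, LinearMap.det_toLin]
  have h := Measure.map_linearMap_addHaar_eq_smul_addHaar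
    (volume : Measure (EuclideanSpace ℝ (Fin n))) (f := toEuclideanLin L) (by rwa [hdet])
  have hc : Continuous (toEuclideanLin L) := LinearMap.continuous_of_finiteDimensional _
  rw [← integral_map hc.measurable.aemeasurable hF.aestronglyMeasurable, h, integral_smul_measure,
    hdet, ENNReal.toReal_ofReal (abs_nonneg _), abs_inv, smul_eq_mul]

lemma integral_exp_neg_inner {T : EuclideanSpace ℝ (Fin n) →L[ℝ] EuclideanSpace ℝ (Fin n)}
    (hT : (formMatrix T).PosDef) :
    ∫ u, Real.exp (-(⟪T u, u⟫ / 2)) =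
      (√(formMatrix T).det)⁻¹ * ∫ u : EuclideanSpace ℝ (Fin n), Real.exp (-(‖u‖ ^ 2 / 2)) := by
  obtain ⟨L, hL⟩ := exists_eq_transpose_mul_self hT
  have hdet : (formMatrix T).det = L.det ^ 2 := by
    rw [hL, det_mul, det_transpose, sq]
  have hL0 : L.det ≠ 0 := by
    have := hT.det_pos
    rw [hdet] at this
    exact fun h => by simp [h] at this
  rw [hdet, Real.sqrt_sq_eq_abs, ← integral_comp_toEuclideanLin (by fun_prop) hL0]
  refine integral_congr_ae (.of_forall fun u => ?_)
  have h : ⟪T u, u⟫ = ‖toEuclideanLin L u‖ ^ 2 := by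
    rw [inner_eq_dotProduct_formMatrix, hL, ← mulVec_mulVec, dotProduct_mulVec, vecMul_transpose,
      EuclideanSpace.real_norm_sq_eq]
    simp [dotProduct, sq]
  simp only [h]

lemma det_eq_of_integral_exp_neg_inner_eq
    {T T' : EuclideanSpace ℝ (Fin n) →L[ℝ] EuclideanSpace ℝ (Fin n)}
    (hT : (formMatrix T).PosDef) (hT' : (formMatrix T').PosDef)
    (h : ∫ u, Real.exp (-(⟪T u, u⟫ / 2)) = ∫ u, Real.exp (-(⟪T' u, u⟫ / 2))) :
    (formMatrix T).det = (formMatrix T').det := by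
  have hpos : 0 < ∫ u : EuclideanSpace ℝ (Fin n), Real.exp (-(‖u‖ ^ 2 / 2)) := by
    have := GaussianFourier.integral_rexp_neg_mul_sq_norm (V := EuclideanSpace ℝ (Fin n))
      (b := 1 / 2) (by norm_num)
    have h' : ∀ u : EuclideanSpace ℝ (Fin n), -(‖u‖ ^ 2 / 2) = -(1 / 2) * ‖u‖ ^ 2 := fun u => by
      ring
    simp_rw [h', this]
    positivity
  rw [integral_exp_neg_inner hT, integral_exp_neg_inner hT', mul_left_inj' hpos.ne', _root_.inv_inj,
    Real.sqrt_inj hT.det_pos.le hT'.det_pos.le] at h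
  exact h

end Matrices

section Legendre

variable {E : Type*} [NormedAddCommGroup E] [InnerProductSpace ℝ E] {f : E → ℝ} {g : E → E}

/-- The Legendre transform of `f`, when `g` is a right inverse of the gradient of `f`. -/
noncomputable def legendreVia (f : E → ℝ) (g : E → E) (θ : E) : ℝ := ⟪θ, g θ⟫ - f (g θ)

lemma inner_sub_eq_legendreVia_sub_bregman [CompleteSpace E] {θ : E} (hθ : gradient f (g θ) = θ)
    (y : E) : ⟪θ, y⟫ - f y = legendreVia f g θ - bregman f (g θ) y := by
  rw [legendreVia, bregman, hθ, inner_sub_right]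
  ring

lemma nonneg_of_forall_sum_exp_nonneg {ι : Type*} (s : Finset ι) (a b : ι → ℝ)
    (h0 : ∑ i ∈ s, a i = 0) (h : ∀ t, 0 < t → 0 ≤ ∑ i ∈ s, a i * Real.exp (t * b i)) :
    0 ≤ ∑ i ∈ s, a i * b i := by
  have hd : HasDerivAt (fun t => ∑ i ∈ s, a i * Real.exp (t * b i)) (∑ i ∈ s, a i * b i) 0 := by
    refine HasDerivAt.fun_sum fun i _ => ?_
    have h1 := (((hasDerivAt_id' (0 : ℝ)).mul_const (b i)).exp).const_mul (a i)
    simpa using h1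
  have h1 := hd.tendsto_slope_zero_right
  refine ge_of_tendsto h1 ?_
  filter_upwards [self_mem_nhdsWithin] with t ht
  have ht' : 0 < t := ht
  simp only [zero_add, zero_mul, Real.exp_zero, mul_one, h0, sub_zero, smul_eq_mul]
  exact mul_nonneg (inv_pos.mpr ht').le (h t ht')

lemma isCondPosKernel_legendreVia [FiniteDimensional ℝ E] [MeasurableSpace E] [BorelSpace E]
    (μ : Measure E) [NeZero μ] {U : Set E} (hg : ∀ θ ∈ U, gradient f (g θ) = θ)
    (hint : ∀ x t, 0 < t → Integrable (fun y => Real.exp (-(t * bregman f x y))) μ)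
    (hψ : ∀ x x' t, 0 < t → ∫ y, Real.exp (-(t * bregman f x y)) ∂μ =
      ∫ y, Real.exp (-(t * bregman f x' y)) ∂μ) (θ : E) :
    IsCondPosKernel U (legendreVia f g) θ := by
  intro c p hc hp
  rw [← Finset.sum_product' Finset.univ Finset.univ
    (fun i j => c i * c j * legendreVia f g (θ + p i + p j))]
  refine nonneg_of_forall_sum_exp_nonneg (Finset.univ ×ˢ Finset.univ)
    (fun q : Fin 4 × Fin 4 => c q.1 * c q.2)
    (fun q => legendreVia f g (θ + p q.1 + p q.2)) ?_ fun t ht => ?_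
  · rw [Finset.sum_product' Finset.univ Finset.univ (fun i j => c i * c j),
      ← Finset.sum_mul_sum, hc, zero_mul]
  set ψ := ∫ y, Real.exp (-(t * bregman f 0 y)) ∂μ
  have hψpos : 0 < ψ := integral_exp_pos (hint 0 t ht)
  have hexp : ∀ η ∈ U, ∀ y, Real.exp (t * (⟪η, y⟫ - f y)) =
      Real.exp (t * legendreVia f g η) * Real.exp (-(t * bregman f (g η) y)) := by
    intro η hη y
    rw [inner_sub_eq_legendreVia_sub_bregman (hg η hη), ← Real.exp_add]
    ring_nf
  have hval : ∀ η ∈ U, ∫ y, Real.exp (t * (⟪η, y⟫ - f y)) ∂μ =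
      Real.exp (t * legendreVia f g η) * ψ := by
    intro η hη
    simp_rw [hexp η hη]
    rw [integral_const_mul, hψ (g η) 0 t ht]
  have hinteg : ∀ η ∈ U, Integrable (fun y => Real.exp (t * (⟪η, y⟫ - f y))) μ := by
    intro η hη
    simp_rw [hexp η hη]
    exact (hint _ t ht).const_mul _
  refine nonneg_of_mul_nonneg_left (b := ψ) ?_ hψpos
  have hsq : ∀ y, ∑ q ∈ (Finset.univ ×ˢ Finset.univ : Finset (Fin 4 × Fin 4)),
      c q.1 * c q.2 * Real.exp (t * (⟪θ + p q.1 + p q.2, y⟫ - f y)) =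
      (∑ i, c i * Real.exp (t * ⟪p i, y⟫)) ^ 2 * Real.exp (t * (⟪θ, y⟫ - f y)) := by
    intro y
    rw [sq, Finset.sum_mul_sum, Finset.sum_mul,
      Finset.sum_product' Finset.univ Finset.univ
        (fun i j => c i * c j * Real.exp (t * (⟪θ + p i + p j, y⟫ - f y)))]
    refine Finset.sum_congr rfl fun i _ => ?_
    rw [Finset.sum_mul]
    refine Finset.sum_congr rfl fun j _ => ?_
    rw [show t * (⟪θ + p i + p j, y⟫ - f y) = t * ⟪p i, y⟫ + t * ⟪p j, y⟫ + t * (⟪θ, y⟫ - f y) by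
      rw [inner_add_left, inner_add_left]; ring, Real.exp_add, Real.exp_add]
    ring
  calc 0 ≤ ∫ y, (∑ i, c i * Real.exp (t * ⟪p i, y⟫)) ^ 2 * Real.exp (t * (⟪θ, y⟫ - f y)) ∂μ :=
        integral_nonneg fun y => by positivity
    _ = ∑ q ∈ (Finset.univ ×ˢ Finset.univ : Finset (Fin 4 × Fin 4)),
        ∫ y, c q.1 * c q.2 * Real.exp (t * (⟪θ + p q.1 + p q.2, y⟫ - f y)) ∂μ := by
      simp_rw [← hsq]
      exact integral_finsetSum _ fun q _ => (hinteg _ (hp _ _)).const_mul _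
    _ = _ := by
      rw [Finset.sum_mul]
      refine Finset.sum_congr rfl fun q _ => ?_
      rw [integral_const_mul, hval _ (hp _ _)]
      ring

lemma dirDeriv_inner_const {h : E → E} {θ : E} (hh : DifferentiableAt ℝ h θ) (u v : E) :
    dirDeriv u (fun η => ⟪h η, v⟫) θ = ⟪fderiv ℝ h θ u, v⟫ := by
  rw [dirDeriv, (hh.hasFDerivAt.inner ℝ (hasFDerivAt_const v θ)).fderiv]
  simp

variable [CompleteSpace E] {U : Set E}

lemma hasFDerivAt_legendreVia (hf : ContDiff ℝ (⊤ : ℕ∞) f) {θ : E} (hθ : gradient f (g θ) = θ)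
    (hg : DifferentiableAt ℝ g θ) :
    HasFDerivAt (legendreVia f g) (innerSL ℝ (g θ)) θ := by
  have h1 : HasFDerivAt f (fderiv ℝ f (g θ)) (g θ) :=
    (hf.differentiable (by simp) _).hasFDerivAt
  have h2 := ((hasFDerivAt_id θ).inner ℝ hg.hasFDerivAt).sub (h1.comp θ hg.hasFDerivAt)
  refine h2.congr_fderiv ?_
  ext v
  have h3 : fderiv ℝ f (g θ) (fderiv ℝ g θ v) = ⟪θ, fderiv ℝ g θ v⟫ := by
    rw [← inner_gradient_eq_fderiv, hθ]
  simp [h3, real_inner_comm]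

lemma dirDeriv_legendreVia (hf : ContDiff ℝ (⊤ : ℕ∞) f) (hU : IsOpen U)
    (hg : ContDiffOn ℝ (⊤ : ℕ∞) g U) (hgU : ∀ θ ∈ U, gradient f (g θ) = θ) (v : E) :
    Set.EqOn (dirDeriv v (legendreVia f g)) (fun θ => ⟪g θ, v⟫) U := by
  intro θ hθ
  rw [dirDeriv, (hasFDerivAt_legendreVia hf (hgU θ hθ)
    ((hg.contDiffAt (hU.mem_nhds hθ)).differentiableAt (by simp))).fderiv]
  simp

lemma dirDeriv_dirDeriv_legendreVia (hf : ContDiff ℝ (⊤ : ℕ∞) f) (hU : IsOpen U)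
    (hg : ContDiffOn ℝ (⊤ : ℕ∞) g U) (hgU : ∀ θ ∈ U, gradient f (g θ) = θ) (u v : E) :
    Set.EqOn (dirDeriv u (dirDeriv v (legendreVia f g))) (fun θ => ⟪fderiv ℝ g θ u, v⟫) U := by
  intro θ hθ
  rw [dirDeriv_congr hU (dirDeriv_legendreVia hf hU hg hgU v) u hθ]
  exact dirDeriv_inner_const ((hg.contDiffAt (hU.mem_nhds hθ)).differentiableAt (by simp)) u v

lemma dirDeriv_dirDeriv_dirDeriv_legendreVia (hf : ContDiff ℝ (⊤ : ℕ∞) f) (hU : IsOpen U)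
    (hg : ContDiffOn ℝ (⊤ : ℕ∞) g U) (hgU : ∀ θ ∈ U, gradient f (g θ) = θ) (w u v : E) {θ : E}
    (hθ : θ ∈ U) :
    dirDeriv w (dirDeriv u (dirDeriv v (legendreVia f g))) θ =
      ⟪fderiv ℝ (fderiv ℝ g) θ w u, v⟫ := by
  rw [dirDeriv_congr hU (dirDeriv_dirDeriv_legendreVia hf hU hg hgU u v) w hθ]
  have h1 : DifferentiableAt ℝ (fderiv ℝ g) θ :=
    ((hg.contDiffAt (hU.mem_nhds hθ)).fderiv_right (m := 1) (by norm_cast)).differentiableAt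
      (by simp)
  rw [dirDeriv_inner_const (h1.clm_apply (differentiableAt_const u))]
  rw [fderiv_clm_apply h1 (differentiableAt_const u)]
  simp

lemma exists_local_inverse_gradient [FiniteDimensional ℝ E] (hf : ContDiff ℝ (⊤ : ℕ∞) f)
    (hA : ∀ x u, u ≠ 0 → 0 < ⟪fderiv ℝ (gradient f) x u, u⟫) (x₀ : E) :
    ∃ (U : Set E) (g : E → E), IsOpen U ∧ gradient f x₀ ∈ U ∧ ContDiffOn ℝ (⊤ : ℕ∞) g U ∧
      (∀ θ ∈ U, gradient f (g θ) = θ) ∧ ∀ᶠ x in 𝓝 x₀, g (gradient f x) = x := by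
  have hequiv : ∀ x, ∃ e : E ≃L[ℝ] E, (e : E →L[ℝ] E) = fderiv ℝ (gradient f) x := by
    intro x
    have hinj : Function.Injective (fderiv ℝ (gradient f) x) := by
      rw [injective_iff_map_eq_zero]
      intro u hu
      by_contra hne
      have := hA x u hne
      simp [hu] at this
    exact ⟨(LinearEquiv.ofInjectiveEndo (fderiv ℝ (gradient f) x : E →ₗ[ℝ] E)
      hinj).toContinuousLinearEquiv, by ext; simp⟩
  choose e he using hequiv
  have hd : ∀ x, HasFDerivAt (gradient f) (e x : E →L[ℝ] E) x := fun x => by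
    rw [he]
    exact ((contDiff_gradient hf).differentiable (by simp) x).hasFDerivAt
  have hc : ContDiffAt ℝ (⊤ : ℕ∞) (gradient f) x₀ := (contDiff_gradient hf).contDiffAt
  let Φ := hc.toOpenPartialHomeomorph (gradient f) (hd x₀) (by simp)
  have hΦ : ∀ x, Φ x = gradient f x := fun x => rfl
  refine ⟨Φ.target, Φ.symm, Φ.open_target,
    hc.image_mem_toOpenPartialHomeomorph_target (hd x₀) (by simp), ?_, ?_, ?_⟩
  · intro θ hθ
    exact (Φ.contDiffAt_symm hθ (hd _) (contDiff_gradient hf).contDiffAt).contDiffWithinAt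
  · intro θ hθ
    rw [← hΦ, Φ.right_inv hθ]
  · filter_upwards [Φ.open_source.mem_nhds
      (hc.mem_toOpenPartialHomeomorph_source (hd x₀) (by simp))] with x hx
    rw [← hΦ, Φ.left_inv hx]

end Legendre

lemma fderiv_fderiv_eq_zero_of_local_inverse {E : Type*} [NormedAddCommGroup E] [NormedSpace ℝ E]
    {G : E → E} {g : E → E} {x : E}
    (hG : ContDiffAt ℝ (⊤ : ℕ∞) G x) (hg : ContDiffAt ℝ (⊤ : ℕ∞) g (G x))
    (hgG : ∀ᶠ y in 𝓝 x, g (G y) = y) (hinj : Function.Injective (fderiv ℝ g (G x)))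
    (hzero : fderiv ℝ (fderiv ℝ g) (G x) = 0) :
    fderiv ℝ (fderiv ℝ G) x = 0 := by
  have hG1 : DifferentiableAt ℝ G x := hG.differentiableAt (by simp)
  have hG2 : DifferentiableAt ℝ (fderiv ℝ G) x :=
    (hG.fderiv_right (m := 1) (by norm_cast)).differentiableAt (by simp)
  have hg2 : DifferentiableAt ℝ (fderiv ℝ g) (G x) :=
    (hg.fderiv_right (m := 1) (by norm_cast)).differentiableAt (by simp)
  have h1 : HasFDerivAt (fun y => fderiv ℝ g (G y)) (0 : E →L[ℝ] E →L[ℝ] E) x := by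
    have := hg2.hasFDerivAt.comp x hG1.hasFDerivAt
    rwa [hzero, ContinuousLinearMap.zero_comp] at this
  have h2 := h1.clm_comp hG2.hasFDerivAt
  have h3 : (fun y => (fderiv ℝ g (G y)).comp (fderiv ℝ G y)) =ᶠ[𝓝 x]
      fun _ => ContinuousLinearMap.id ℝ E := by
    have hgd : ∀ᶠ y in 𝓝 x, ContDiffAt ℝ 1 g (G y) :=
      hG1.continuousAt.eventually ((hg.of_le (by norm_cast)).eventually (by simp))
    have hGd : ∀ᶠ y in 𝓝 x, ContDiffAt ℝ 1 G y := (hG.of_le (by norm_cast)).eventually (by simp)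
    filter_upwards [hgG.eventually_nhds, hgd, hGd] with y hy hy1 hy2
    have h4 := (hy1.differentiableAt (by simp)).hasFDerivAt.comp y
      (hy2.differentiableAt (by simp)).hasFDerivAt
    exact h4.unique ((hasFDerivAt_id y).congr_of_eventuallyEq hy)
  have h5 := h2.unique ((hasFDerivAt_const _ x).congr_of_eventuallyEq h3)
  ext w u
  have h6 := congrArg (fun T : E →L[ℝ] E →L[ℝ] E => T w u) h5
  exact hinj (by simpa using h6)

lemma eq_quadratic_of_fderiv_fderiv_gradient_eq_zero {E : Type*} [NormedAddCommGroup E]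
    [InnerProductSpace ℝ E] [CompleteSpace E] {f : E → ℝ} (hf : ContDiff ℝ (⊤ : ℕ∞) f)
    (h : ∀ x, fderiv ℝ (fderiv ℝ (gradient f)) x = 0) (x : E) :
    f x = ⟪fderiv ℝ (gradient f) 0 x, x⟫ / 2 + ⟪gradient f 0, x⟫ + f 0 := by
  have hG := contDiff_gradient hf
  have hA : ∀ y, fderiv ℝ (gradient f) y = fderiv ℝ (gradient f) 0 := fun y =>
    is_const_of_fderiv_eq_zero ((hG.fderiv_right (m := 1) (by norm_cast)).differentiable (by simp))
      h y 0
  have hgrad : ∀ y, gradient f y = gradient f 0 + fderiv ℝ (gradient f) 0 y := by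
    intro y
    have hd : ∀ z, HasFDerivAt (fun z => gradient f z - fderiv ℝ (gradient f) 0 z)
        (0 : E →L[ℝ] E) z := by
      intro z
      have := ((hG.differentiable (by simp) z).hasFDerivAt).fun_sub
        (fderiv ℝ (gradient f) 0).hasFDerivAt
      rwa [hA z, sub_self] at this
    have := is_const_of_fderiv_eq_zero (fun z => (hd z).differentiableAt)
      (fun z => (hd z).fderiv) y 0
    rw [map_zero, sub_zero] at this
    rw [← this, sub_add_cancel]
  have hd : ∀ r : ℝ, HasDerivAt (fun r : ℝ => f (0 + r • x) -
      (⟪fderiv ℝ (gradient f) 0 x, x⟫ / 2 * r ^ 2 + ⟪gradient f 0, x⟫ * r)) 0 r := by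
    intro r
    have h1 := (hasDerivAt_line hf 0 x r).fun_sub
      (((hasDerivAt_pow 2 r).const_mul (⟪fderiv ℝ (gradient f) 0 x, x⟫ / 2)).fun_add
        ((hasDerivAt_id' r).const_mul ⟪gradient f 0, x⟫))
    refine h1.congr_deriv ?_
    rw [zero_add, hgrad (r • x), map_smul, inner_add_left, inner_smul_left]
    simp only [conj_trivial]
    push_cast
    ring
  have := is_const_of_deriv_eq_zero (fun r => (hd r).differentiableAt) (fun r => (hd r).deriv) 1 0
  simp only [one_smul, zero_smul, zero_add] at this
  linarith

section Euclidean

open Matrix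

variable {n : ℕ}

lemma inner_toLp_eq_formMatrix (T : EuclideanSpace ℝ (Fin n) →L[ℝ] EuclideanSpace ℝ (Fin n))
    (L : Matrix (Fin n) (Fin n) ℝ) :
    (Matrix.of fun i j => ⟪T (WithLp.toLp 2 (L i)), WithLp.toLp 2 (L j)⟫) =
      L * formMatrix T * Lᵀ := by
  ext i j
  rw [Matrix.of_apply, inner_eq_dotProduct_formMatrix, Matrix.mul_assoc]
  simp only [Matrix.mul_apply, dotProduct, mulVec, transpose_apply]

lemma exists_eq_sum_smul_rows {L : Matrix (Fin n) (Fin n) ℝ} (hL : L.det ≠ 0)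
    (u : EuclideanSpace ℝ (Fin n)) :
    ∃ a : Fin n → ℝ, u = ∑ i, a i • (WithLp.toLp 2 (L i) : EuclideanSpace ℝ (Fin n)) := by
  refine ⟨u.ofLp ᵥ* L⁻¹, ?_⟩
  have h : (u.ofLp ᵥ* L⁻¹) ᵥ* L = u.ofLp := by
    rw [vecMul_vecMul, nonsing_inv_mul _ (by simpa using hL), vecMul_one]
  ext j
  conv_lhs => rw [← h]
  simp [vecMul, dotProduct]

lemma fderiv_fderiv_gradient_eq_zero {f : EuclideanSpace ℝ (Fin n) → ℝ}
    (hf : ContDiff ℝ (⊤ : ℕ∞) f) (hconv : ConvexOn ℝ Set.univ f)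
    (hpos : ∀ x, (formMatrix (fderiv ℝ (gradient f) x)).PosDef)
    (hψ : ∀ x x' t, 0 < t → ∫ y, Real.exp (-(t * bregman f x y)) =
      ∫ y, Real.exp (-(t * bregman f x' y))) (x₀ : EuclideanSpace ℝ (Fin n)) :
    fderiv ℝ (fderiv ℝ (gradient f)) x₀ = 0 := by
  have hA : ∀ x u, u ≠ 0 → 0 < ⟪fderiv ℝ (gradient f) x u, u⟫ :=
    fun x u hu => inner_pos_of_posDef (hpos x) hu
  have hdet : ∀ x, (formMatrix (fderiv ℝ (gradient f) x)).det =
      (formMatrix (fderiv ℝ (gradient f) x₀)).det := fun x =>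
    det_eq_of_integral_exp_neg_inner_eq (hpos x) (hpos x₀)
      (integral_exp_neg_inner_fderiv_gradient_congr hf hconv hA hψ x x₀)
  obtain ⟨U, g, hU, hθ₀, hg, hgU, hgG⟩ := exists_local_inverse_gradient hf hA x₀
  have hgx₀ : g (gradient f x₀) = x₀ := hgG.self_of_nhds
  have hgat : ∀ θ ∈ U, ContDiffAt ℝ (⊤ : ℕ∞) g θ := fun θ hθ => hg.contDiffAt (hU.mem_nhds hθ)
  have hcomp : ∀ θ ∈ U,
      (fderiv ℝ (gradient f) (g θ)).comp (fderiv ℝ g θ) = ContinuousLinearMap.id ℝ _ := by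
    intro θ hθ
    have h1 := ((contDiff_gradient hf).differentiable (by simp) (g θ)).hasFDerivAt.comp θ
      ((hgat θ hθ).differentiableAt (by simp)).hasFDerivAt
    refine h1.unique ((hasFDerivAt_id θ).congr_of_eventuallyEq ?_)
    filter_upwards [hU.mem_nhds hθ] with η hη using hgU η hη
  have hNM : ∀ θ ∈ U,
      formMatrix (fderiv ℝ g θ) * formMatrix (fderiv ℝ (gradient f) (g θ)) = 1 := by
    intro θ hθ
    rw [← formMatrix_comp, hcomp θ hθ, formMatrix_id]
  obtain ⟨L, hL⟩ := exists_eq_transpose_mul_self (hpos x₀)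
  have hLdet : (formMatrix (fderiv ℝ (gradient f) x₀)).det = L.det * L.det := by
    rw [hL, det_mul, det_transpose]
  have hL0 : L.det ≠ 0 := by
    have := (hpos x₀).det_pos
    rw [hLdet] at this
    exact fun h => by simp [h] at this
  set e : Fin n → EuclideanSpace ℝ (Fin n) := fun i => WithLp.toLp 2 (L i)
  set K := legendreVia f g
  have hhess : ∀ θ ∈ U, (Matrix.of fun i j => dirDeriv (e i) (dirDeriv (e j) K) θ) =
      L * formMatrix (fderiv ℝ g θ) * Lᵀ := by
    intro θ hθ
    rw [← inner_toLp_eq_formMatrix]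
    ext i j
    exact dirDeriv_dirDeriv_legendreVia hf hU hg hgU (e i) (e j) hθ
  have hKsmooth : ContDiffOn ℝ (⊤ : ℕ∞) K U :=
    (contDiffOn_id.inner ℝ hg).sub (hf.comp_contDiffOn hg)
  have hthird := third_deriv_eq_zero hU hKsmooth
    (isCondPosKernel_legendreVia volume hgU
      (fun x t ht => integrable_exp_neg_bregman hf hconv hA x ht) hψ (gradient f x₀)) hθ₀ (e := e)
    (by
      rw [hhess _ hθ₀, Matrix.mul_assoc, mul_eq_one_comm, Matrix.mul_assoc, ← hL]
      simpa only [hgx₀] using hNM _ hθ₀)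
    (by
      intro θ hθ
      have h1 := congrArg Matrix.det (hNM θ hθ)
      rw [det_mul, det_one, hdet, hLdet] at h1
      rw [hhess θ hθ, det_mul, det_mul, det_transpose]
      linarith)
  have hzero : fderiv ℝ (fderiv ℝ g) (gradient f x₀) = 0 := by
    have h1 : ∀ i j k, ⟪fderiv ℝ (fderiv ℝ g) (gradient f x₀) (WithLp.toLp 2 (L i))
        (WithLp.toLp 2 (L j)), WithLp.toLp 2 (L k)⟫ = 0 := by
      intro i j k
      rw [← dirDeriv_dirDeriv_dirDeriv_legendreVia hf hU hg hgU _ _ _ hθ₀]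
      exact hthird i j k
    ext1 u
    ext1 v
    refine ext_inner_right ℝ fun w => ?_
    obtain ⟨a, ha⟩ := exists_eq_sum_smul_rows hL0 u
    obtain ⟨b, hb⟩ := exists_eq_sum_smul_rows hL0 v
    obtain ⟨c, hc⟩ := exists_eq_sum_smul_rows hL0 w
    rw [ha, hb, hc]
    simp only [map_sum, map_smul, _root_.sum_apply, _root_.smul_apply, _root_.zero_apply,
      sum_inner, inner_sum, inner_smul_left, inner_smul_right, inner_zero_left, h1, mul_zero,
      Finset.sum_const_zero]
  refine fderiv_fderiv_eq_zero_of_local_inverse (contDiff_gradient hf).contDiffAt (hgat _ hθ₀)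
    hgG ?_ hzero
  intro u v huv
  have h1 := congrArg (fderiv ℝ (gradient f) (g (gradient f x₀))) huv
  simpa only [← ContinuousLinearMap.comp_apply, hcomp _ hθ₀, ContinuousLinearMap.id_apply] using h1

end Euclidean

theorem elliptic_paraboloid_of_constant_volume (n : ℕ) (hn : 1 ≤ n)
    (f : EuclideanSpace ℝ (Fin n) → ℝ)
    (hf : ContDiff ℝ (⊤ : ℕ∞) f) (hconv : ConvexOn ℝ Set.univ f)
    (hhess : ∀ x, (hessianMatrix f x).PosDef)
    (φ : ℝ → ℝ) (hφ : ∀ k, 0 < k → 0 ≤ φ k)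
    (hV : ∀ (x : EuclideanSpace ℝ (Fin n)) (k : ℝ), 0 < k →
      (∫ y in {y | f y < f x + ⟪gradient f x, y - x⟫ + k},
        (f x + ⟪gradient f x, y - x⟫ + k - f y)) = φ k) :
    ∃ (A : Matrix (Fin n) (Fin n) ℝ) (b : EuclideanSpace ℝ (Fin n)) (c : ℝ),
      A.PosDef ∧ ∀ x, f x = (∑ i, ∑ j, A i j * x i * x j) + (∑ i, b i * x i) + c := by
  have hpos : ∀ x, (formMatrix (fderiv ℝ (gradient f) x)).PosDef := fun x =>
    hessianMatrix_eq_formMatrix f x ▸ hhess x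
  have hA : ∀ x u, u ≠ 0 → 0 < ⟪fderiv ℝ (gradient f) x u, u⟫ :=
    fun x u hu => inner_pos_of_posDef (hpos x) hu
  have hψ : ∀ x x' t, 0 < t → ∫ y, Real.exp (-(t * bregman f x y)) =
      ∫ y, Real.exp (-(t * bregman f x' y)) :=
    fun x x' t ht => integral_exp_neg_bregman_congr hf hconv hA hV x x' ht
  refine ⟨(2⁻¹ : ℝ) • formMatrix (fderiv ℝ (gradient f) 0), gradient f 0, f 0,
    (hpos 0).smul (by norm_num), fun x => ?_⟩
  rw [eq_quadratic_of_fderiv_fderiv_gradient_eq_zero hf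
    (fderiv_fderiv_gradient_eq_zero hf hconv hpos hψ) x, inner_eq_sum_formMatrix,
    Finset.sum_div]
  congr 2
  · refine Finset.sum_congr rfl fun i _ => ?_
    rw [Finset.sum_div]
    refine Finset.sum_congr rfl fun j _ => ?_
    rw [Matrix.smul_apply, smul_eq_mul]
    ring
  · rw [PiLp.inner_apply]
    exact Finset.sum_congr rfl fun i _ => by simp [mul_comm]
end
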